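/- Let 3 ≤ n ≤ 7, let k ≥ 1, and let Γ be a k-homogeneous access structure on n players satisfying monotonicity, no-cloning and no-redundancy that admits a pure QSS state. Then either n = 5, k = 3 and Γ is the 3-threshold structure (Γ_min is the family of all 3-element subsets of {1,…,5}), or n = 7, k = 3, |Γ_min| = 7 and every 2-element subset of {1,…,7} is contained in exactly one set of Γ_min (Γ_min is a Fano plane). -/

import Mathlib

open Finset

/-- Monotonicity of an access structure on `n` players (players = `Fin n`). -/
def Monotonic {n : ℕ} (Γ : Finset (Fin n) → Prop) : Prop :=
  ∀ A B : Finset (Fin n), Γ A → A ⊆ B → Γ B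

/-- No-cloning: a set is authorized iff its complement is not. -/
def NoCloning {n : ℕ} (Γ : Finset (Fin n) → Prop) : Prop :=
  ∀ A : Finset (Fin n), Γ A ↔ ¬ Γ Aᶜ

/-- `A` is a minimal authorized set of `Γ`. -/
def IsMinimal {n : ℕ} (Γ : Finset (Fin n) → Prop) (A : Finset (Fin n)) : Prop :=
  Γ A ∧ ∀ B : Finset (Fin n), B ⊂ A → ¬ Γ B

/-- No-redundancy: every player lies in some minimal authorized set. -/
def NoRedundancy {n : ℕ} (Γ : Finset (Fin n) → Prop) : Prop :=
  ∀ i : Fin n, ∃ A : Finset (Fin n), IsMinimal Γ A ∧ i ∈ A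

noncomputable section

/-- Combine an assignment on `A` and one on `Aᶜ` into a full bit string. -/
def glue {m : ℕ} (A : Finset (Fin m)) (u : {x // x ∈ A} → Fin 2)
    (w : {x // x ∈ Aᶜ} → Fin 2) : Fin m → Fin 2 :=
  fun x => if h : x ∈ A then u ⟨x, h⟩ else w ⟨x, Finset.mem_compl.mpr h⟩

/-- Reduced density matrix of the pure state `ψ` on the qubit positions in `A`:
the partial trace over the positions outside `A` of `ψψ†`. -/
def reducedDensity {m : ℕ} (ψ : (Fin m → Fin 2) → ℂ) (A : Finset (Fin m)) :
    Matrix ({x // x ∈ A} → Fin 2) ({x // x ∈ A} → Fin 2) ℂ :=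
  fun u v => ∑ w : {x // x ∈ Aᶜ} → Fin 2,
    ψ (glue A u w) * (starRingEnd ℂ) (ψ (glue A v w))

/-- The reduction of `ψ` to `A` is maximally mixed, i.e. equals `2^{-|A|} · I`. -/
def MaximallyMixed {m : ℕ} (ψ : (Fin m → Fin 2) → ℂ) (A : Finset (Fin m)) : Prop :=
  reducedDensity ψ A =
    ((2 : ℂ) ^ A.card)⁻¹ •
      (1 : Matrix ({x // x ∈ A} → Fin 2) ({x // x ∈ A} → Fin 2) ℂ)

open Classical in
/-- Von Neumann entropy (natural logarithm): sum of `-λ log λ` over the eigenvalues. -/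
def vnEntropy {ι : Type} [Fintype ι] [DecidableEq ι] (ρ : Matrix ι ι ℂ) : ℝ :=
  if h : ρ.IsHermitian then ∑ i, Real.negMulLog (h.eigenvalues i) else 0

/-- Entropy of the reduction of `ψ` to the set `A` of qubit positions. -/
def Sent {m : ℕ} (ψ : (Fin m → Fin 2) → ℂ) (A : Finset (Fin m)) : ℝ :=
  vnEntropy (reducedDensity ψ A)

/-- The qubit positions (in `{0,1,…,n} = Fin (n+1)`, where `0` is the reference qubit)
of a set of players `A ⊆ Fin n`: player `i` holds position `i.succ`. -/
def posOf {n : ℕ} (A : Finset (Fin n)) : Finset (Fin (n + 1)) := A.image Fin.succ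

/-- `ψ` is a pure QSS state for the access structure `Γ`: a normalized pure state of
`n+1` qubits (position `0` being the reference qubit `R`) satisfying Recoverability
`S(R) + S(A) - S(R ∪ A) = 2 log 2` for authorized `A` and Secrecy
`S(R) + S(B) - S(R ∪ B) = 0` for unauthorized `B`. -/
structure IsPureQSSState {n : ℕ} (Γ : Finset (Fin n) → Prop)
    (ψ : (Fin (n + 1) → Fin 2) → ℂ) : Prop where
  normalized : ∑ x : Fin (n + 1) → Fin 2, ‖ψ x‖ ^ 2 = 1
  recover : ∀ A : Finset (Fin n), Γ A →
    Sent ψ {0} + Sent ψ (posOf A) - Sent ψ (insert 0 (posOf A)) = 2 * Real.log 2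
  secrecy : ∀ B : Finset (Fin n), ¬ Γ B →
    Sent ψ {0} + Sent ψ (posOf B) - Sent ψ (insert 0 (posOf B)) = 0

end

/-!
Recoverability, secrecy and subadditivity force the shares of a minimal set to be uncorrelated and
maximally mixed, one bit of entropy each. No-cloning gives `2 * k ≤ n + 1`. In the extremal case
`n + 1 = 2 * k` every `k`-set is minimal, so all reductions of the state to at most half of the
`2 * k` qubits are maximally mixed; this is the threshold structure for `n = 5`, while Rains' shadow
inequality forbids such states on four and on eight qubits. The remaining cases with `k ≤ 2` die
combinatorially.

For `k = 3` and `n = 6, 7`, the equality case of subadditivity (vanishing correlations are inherited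
by subsystems) shows that two minimal sets never share exactly two players. Hence each pair of
players lies in at most one minimal set, which bounds `|Γ_min|` from above; each triple of players
is either minimal or disjoint from a minimal set, which bounds `|Γ_min|` from below. The bounds
contradict each other for `n = 6`, and for `n = 7` they both equal seven, forcing a Fano plane.
-/

open scoped ComplexOrder Kronecker Matrix

/-! ### Shannon entropy -/

section Shannon

variable {ι κ : Type*} [Fintype ι] [Fintype κ]

lemma mul_klFun_div {p r : ℝ} (hr : r = 0 → p = 0) :
    r * InformationTheory.klFun (p / r) = r - p - p * Real.log r - Real.negMulLog p := by
  by_cases hr0 : r = 0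
  · simp [hr0, hr hr0]
  by_cases hp0 : p = 0
  · simp [hp0, InformationTheory.klFun_zero]
  rw [InformationTheory.klFun_apply, Real.log_div hp0 hr0, Real.negMulLog]
  field_simp
  ring

variable {p r : ι → ℝ}

lemma sum_mul_klFun_div (hr : ∀ i, r i = 0 → p i = 0) (hsum : ∑ i, p i = ∑ i, r i) :
    ∑ i, r i * InformationTheory.klFun (p i / r i) =
      -∑ i, p i * Real.log (r i) - ∑ i, Real.negMulLog (p i) := by
  simp only [mul_klFun_div (hr _), Finset.sum_sub_distrib, hsum]
  ring

lemma sum_negMulLog_le_neg_sum_mul_log (hp : ∀ i, 0 ≤ p i) (hr0 : ∀ i, 0 ≤ r i)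
    (hr : ∀ i, r i = 0 → p i = 0) (hsum : ∑ i, p i = ∑ i, r i) :
    ∑ i, Real.negMulLog (p i) ≤ -∑ i, p i * Real.log (r i) := by
  have hkl : 0 ≤ ∑ i, r i * InformationTheory.klFun (p i / r i) := Finset.sum_nonneg fun i _ =>
    mul_nonneg (hr0 i) (InformationTheory.klFun_nonneg (div_nonneg (hp i) (hr0 i)))
  linarith [sum_mul_klFun_div hr hsum]

lemma eq_of_sum_negMulLog_eq_neg_sum_mul_log (hp : ∀ i, 0 ≤ p i) (hr0 : ∀ i, 0 ≤ r i)
    (hr : ∀ i, r i = 0 → p i = 0) (hsum : ∑ i, p i = ∑ i, r i)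
    (heq : ∑ i, Real.negMulLog (p i) = -∑ i, p i * Real.log (r i)) : p = r := by
  have hkl : ∑ i, r i * InformationTheory.klFun (p i / r i) = 0 := by
    rw [sum_mul_klFun_div hr hsum, heq, sub_self]
  funext i
  by_cases hri : r i = 0
  · rw [hri, hr i hri]
  have hdiv : 0 ≤ p i / r i := div_nonneg (hp i) (hr0 i)
  have hterm := (Finset.sum_eq_zero_iff_of_nonneg fun i _ => mul_nonneg (hr0 i)
    (InformationTheory.klFun_nonneg (div_nonneg (hp i) (hr0 i)))).mp hkl i (Finset.mem_univ i)
  have hkl0 : InformationTheory.klFun (p i / r i) = 0 := (mul_eq_zero.mp hterm).resolve_left hri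
  exact (div_eq_one_iff_eq hri).mp ((InformationTheory.klFun_eq_zero_iff hdiv).mp hkl0)

lemma sum_mul_log_inv_card (hp1 : ∑ i, p i = 1) :
    -∑ i, p i * Real.log (Fintype.card ι : ℝ)⁻¹ = Real.log (Fintype.card ι) := by
  rw [← Finset.sum_mul, hp1, Real.log_inv, one_mul, neg_neg]

lemma sum_inv_card [Nonempty ι] : ∑ _i : ι, (Fintype.card ι : ℝ)⁻¹ = 1 := by
  simp [Finset.card_univ]

lemma sum_negMulLog_le_log_card [Nonempty ι] (hp : ∀ i, 0 ≤ p i) (hp1 : ∑ i, p i = 1) :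
    ∑ i, Real.negMulLog (p i) ≤ Real.log (Fintype.card ι) := by
  rw [← sum_mul_log_inv_card hp1]
  exact sum_negMulLog_le_neg_sum_mul_log hp (fun _ => by positivity) (fun _ h => by simp at h)
    (hp1.trans sum_inv_card.symm)

lemma eq_inv_card_of_sum_negMulLog_eq [Nonempty ι] (hp : ∀ i, 0 ≤ p i) (hp1 : ∑ i, p i = 1)
    (heq : ∑ i, Real.negMulLog (p i) = Real.log (Fintype.card ι)) :
    p = fun _ => (Fintype.card ι : ℝ)⁻¹ := by
  refine eq_of_sum_negMulLog_eq_neg_sum_mul_log hp (fun _ => by positivity)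
    (fun _ h => by simp at h)
    (hp1.trans sum_inv_card.symm) ?_
  rw [heq, sum_mul_log_inv_card hp1]

lemma sum_negMulLog_mul {a : ι → ℝ} {b : κ → ℝ} (ha : ∑ i, a i = 1) (hb : ∑ j, b j = 1) :
    ∑ x : ι × κ, Real.negMulLog (a x.1 * b x.2) =
      ∑ i, Real.negMulLog (a i) + ∑ j, Real.negMulLog (b j) := by
  simp only [Fintype.sum_prod_type, Real.negMulLog_mul, Finset.sum_add_distrib, ← Finset.sum_mul,
    ← Finset.mul_sum, ha, hb, one_mul]

variable {q : ι × κ → ℝ} {a : ι → ℝ} {b : κ → ℝ}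

lemma eq_zero_of_marginal_mul_eq_zero (hq : ∀ x, 0 ≤ q x) (ha : ∀ i, ∑ j, q (i, j) = a i)
    (hb : ∀ j, ∑ i, q (i, j) = b j) (x : ι × κ) (hx : a x.1 * b x.2 = 0) : q x = 0 := by
  rcases mul_eq_zero.mp hx with hax | hbx
  · rw [← ha, Finset.sum_eq_zero_iff_of_nonneg fun _ _ => hq _] at hax
    exact hax x.2 (Finset.mem_univ _)
  · rw [← hb, Finset.sum_eq_zero_iff_of_nonneg fun _ _ => hq _] at hbx
    exact hbx x.1 (Finset.mem_univ _)

lemma neg_sum_mul_log_marginal_mul (hq : ∀ x, 0 ≤ q x) (ha : ∀ i, ∑ j, q (i, j) = a i)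
    (hb : ∀ j, ∑ i, q (i, j) = b j) :
    -∑ x, q x * Real.log (a x.1 * b x.2) =
      ∑ i, Real.negMulLog (a i) + ∑ j, Real.negMulLog (b j) := by
  have hlog : ∀ x : ι × κ, q x * Real.log (a x.1 * b x.2) =
      q x * Real.log (a x.1) + q x * Real.log (b x.2) := fun x => by
    by_cases hx : a x.1 * b x.2 = 0
    · simp [eq_zero_of_marginal_mul_eq_zero hq ha hb x hx]
    · rw [Real.log_mul (left_ne_zero_of_mul hx) (right_ne_zero_of_mul hx), mul_add]
  have hrow : ∑ x : ι × κ, q x * Real.log (a x.1) = ∑ i, a i * Real.log (a i) := by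
    simp only [Fintype.sum_prod_type, ← Finset.sum_mul, ha]
  have hcol : ∑ x : ι × κ, q x * Real.log (b x.2) = ∑ j, b j * Real.log (b j) := by
    simp only [Fintype.sum_prod_type_right, ← Finset.sum_mul, hb]
  simp only [hlog, Finset.sum_add_distrib, hrow, hcol, Real.negMulLog, neg_mul,
    Finset.sum_neg_distrib]
  ring

lemma sum_marginal_mul (ha : ∀ i, ∑ j, q (i, j) = a i) (hb : ∀ j, ∑ i, q (i, j) = b j)
    (hq1 : ∑ x, q x = 1) : ∑ x : ι × κ, a x.1 * b x.2 = 1 := by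
  have ha1 : ∑ i, a i = 1 := by simp only [← ha, ← hq1, Fintype.sum_prod_type]
  have hb1 : ∑ j, b j = 1 := by simp only [← hb, ← hq1, Fintype.sum_prod_type_right]
  simp only [Fintype.sum_prod_type, ← Finset.mul_sum, hb1, mul_one, ha1]

lemma marginal_mul_nonneg (hq : ∀ x, 0 ≤ q x) (ha : ∀ i, ∑ j, q (i, j) = a i)
    (hb : ∀ j, ∑ i, q (i, j) = b j) (x : ι × κ) : 0 ≤ a x.1 * b x.2 := by
  rw [← ha, ← hb]
  exact mul_nonneg (Finset.sum_nonneg fun _ _ => hq _) (Finset.sum_nonneg fun _ _ => hq _)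

lemma sum_negMulLog_le_marginals (hq : ∀ x, 0 ≤ q x) (ha : ∀ i, ∑ j, q (i, j) = a i)
    (hb : ∀ j, ∑ i, q (i, j) = b j) (hq1 : ∑ x, q x = 1) :
    ∑ x, Real.negMulLog (q x) ≤ ∑ i, Real.negMulLog (a i) + ∑ j, Real.negMulLog (b j) := by
  rw [← neg_sum_mul_log_marginal_mul hq ha hb]
  exact sum_negMulLog_le_neg_sum_mul_log hq (marginal_mul_nonneg hq ha hb)
    (eq_zero_of_marginal_mul_eq_zero hq ha hb) (hq1.trans (sum_marginal_mul ha hb hq1).symm)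

lemma eq_marginal_mul_of_sum_negMulLog_eq (hq : ∀ x, 0 ≤ q x) (ha : ∀ i, ∑ j, q (i, j) = a i)
    (hb : ∀ j, ∑ i, q (i, j) = b j) (hq1 : ∑ x, q x = 1)
    (heq : ∑ x, Real.negMulLog (q x) = ∑ i, Real.negMulLog (a i) + ∑ j, Real.negMulLog (b j)) :
    q = fun x => a x.1 * b x.2 :=
  eq_of_sum_negMulLog_eq_neg_sum_mul_log hq (marginal_mul_nonneg hq ha hb)
    (eq_zero_of_marginal_mul_eq_zero hq ha hb) (hq1.trans (sum_marginal_mul ha hb hq1).symm)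
    (heq.trans (neg_sum_mul_log_marginal_mul hq ha hb).symm)

end Shannon

section DoublyStochastic

variable {ι : Type*} [Fintype ι] [DecidableEq ι] {D : Matrix ι ι ℝ} {f : ℝ → ℝ} {s : Set ℝ}
  {v : ι → ℝ}

lemma sum_sum_mul_of_mem_doublyStochastic (hD : D ∈ doublyStochastic ℝ ι) (w : ι → ℝ) :
    ∑ i, ∑ j, D i j * w j = ∑ j, w j := by
  rw [Finset.sum_comm]
  simp only [← Finset.sum_mul, sum_col_of_mem_doublyStochastic hD, one_mul]

lemma sum_mul_le_map_mulVec (hD : D ∈ doublyStochastic ℝ ι) (hf : ConcaveOn ℝ s f)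
    (hv : ∀ j, v j ∈ s) (i : ι) : ∑ j, D i j * f (v j) ≤ f ((D *ᵥ v) i) :=
  hf.le_map_sum (fun _ _ => nonneg_of_mem_doublyStochastic hD)
    (sum_row_of_mem_doublyStochastic hD i) fun j _ => hv j

lemma sum_map_le_sum_map_mulVec (hD : D ∈ doublyStochastic ℝ ι) (hf : ConcaveOn ℝ s f)
    (hv : ∀ j, v j ∈ s) : ∑ j, f (v j) ≤ ∑ i, f ((D *ᵥ v) i) := by
  rw [← sum_sum_mul_of_mem_doublyStochastic hD fun j => f (v j)]
  exact Finset.sum_le_sum fun i _ => sum_mul_le_map_mulVec hD hf hv i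

lemma eq_mulVec_of_sum_map_eq_sum_map_mulVec (hD : D ∈ doublyStochastic ℝ ι)
    (hf : StrictConcaveOn ℝ s f) (hv : ∀ j, v j ∈ s)
    (heq : ∑ j, f (v j) = ∑ i, f ((D *ᵥ v) i)) {i j : ι} (hij : D i j ≠ 0) :
    v j = (D *ᵥ v) i := by
  rw [← sum_sum_mul_of_mem_doublyStochastic hD fun j => f (v j)] at heq
  have hterm := (Finset.sum_eq_sum_iff_of_le fun i _ =>
    sum_mul_le_map_mulVec hD hf.concaveOn hv i).mp heq i (Finset.mem_univ i)
  exact (hf.map_sum_eq_iff' (fun _ _ => nonneg_of_mem_doublyStochastic hD)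
    (sum_row_of_mem_doublyStochastic hD i) fun j _ => hv j).mp hterm.symm j (Finset.mem_univ j) hij

end DoublyStochastic

/-! ### Von Neumann entropy -/

section Density

variable {ι : Type*} [Fintype ι] {ρ : Matrix ι ι ℂ}

/-- Density matrices: positive semidefinite of trace one. -/
def IsDensity (ρ : Matrix ι ι ℂ) : Prop := ρ.PosSemidef ∧ ρ.trace = 1

namespace IsDensity

lemma re_diag_nonneg (hρ : IsDensity ρ) (i : ι) : 0 ≤ (ρ i i).re :=
  (Complex.nonneg_iff.mp hρ.1.diag_nonneg).1

lemma sum_re_diag (hρ : IsDensity ρ) : ∑ i, (ρ i i).re = 1 := by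
  simpa [Matrix.trace] using congrArg Complex.re hρ.2

lemma ofReal_re_diag (hρ : IsDensity ρ) (i : ι) : ((ρ i i).re : ℂ) = ρ i i :=
  hρ.1.isHermitian.coe_re_apply_self i

end IsDensity

end Density

section VonNeumann

variable {ι κ : Type} [Fintype ι] [DecidableEq ι] [Fintype κ] [DecidableEq κ]
  {ρ U : Matrix ι ι ℂ}

lemma vnEntropy_eq_sum_roots_charpoly (hρ : ρ.IsHermitian) :
    vnEntropy ρ = (ρ.charpoly.roots.map fun z => Real.negMulLog z.re).sum := by
  simp [vnEntropy, hρ, hρ.roots_charpoly_eq_eigenvalues]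

lemma vnEntropy_submatrix_equiv (hρ : ρ.IsHermitian) (e : κ ≃ ι) :
    vnEntropy (ρ.submatrix e e) = vnEntropy ρ := by
  rw [vnEntropy_eq_sum_roots_charpoly hρ, vnEntropy_eq_sum_roots_charpoly (hρ.submatrix e),
    ← Matrix.charpoly_reindex e.symm ρ, Matrix.reindex_apply, Equiv.symm_symm]

lemma vnEntropy_transpose (hρ : ρ.IsHermitian) : vnEntropy ρᵀ = vnEntropy ρ := by
  rw [vnEntropy_eq_sum_roots_charpoly hρ, vnEntropy_eq_sum_roots_charpoly hρ.transpose,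
    Matrix.charpoly_transpose]

lemma vnEntropy_mul_conjTranspose_self (M : Matrix ι κ ℂ) :
    vnEntropy (M * Mᴴ) = vnEntropy (Mᴴ * M) := by
  rw [vnEntropy_eq_sum_roots_charpoly (Matrix.isHermitian_mul_conjTranspose_self M),
    vnEntropy_eq_sum_roots_charpoly (Matrix.isHermitian_conjTranspose_mul_self M)]
  have hroots := congrArg Polynomial.roots (Matrix.charpoly_mul_comm' M Mᴴ)
  rw [Polynomial.roots_mul, Polynomial.roots_mul, Polynomial.roots_X_pow,
    Polynomial.roots_X_pow] at hroots
  · simpa [Multiset.map_nsmul, Multiset.sum_nsmul] using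
      congrArg (fun s => (s.map fun z : ℂ => Real.negMulLog z.re).sum) hroots
  all_goals exact mul_ne_zero (pow_ne_zero _ Polynomial.X_ne_zero) (Matrix.charpoly_monic _).ne_zero

lemma vnEntropy_conj_unitary (hρ : ρ.IsHermitian) (hU : U ∈ Matrix.unitaryGroup ι ℂ) :
    vnEntropy (Uᴴ * ρ * U) = vnEntropy ρ := by
  rw [vnEntropy_eq_sum_roots_charpoly hρ,
    vnEntropy_eq_sum_roots_charpoly (Matrix.isHermitian_conjTranspose_mul_mul U hρ),
    Matrix.charpoly_mul_comm, ← mul_assoc, ← Matrix.star_eq_conjTranspose,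
    Matrix.mem_unitaryGroup_iff.mp hU, one_mul]

/-- The Shannon entropy of the diagonal of `ρ`, i.e. of the outcome distribution when `ρ` is
measured in the standard basis. -/
noncomputable def diagEntropy (ρ : Matrix ι ι ℂ) : ℝ := ∑ i, Real.negMulLog (ρ i i).re

lemma vnEntropy_eq_diagEntropy (hρ : ρ.IsHermitian) (hd : ρ.IsDiag) :
    vnEntropy ρ = diagEntropy ρ := by
  rw [vnEntropy_eq_sum_roots_charpoly hρ, ← hd.diagonal_diag, Matrix.charpoly_diagonal,
    Polynomial.roots_prod _ _ (Finset.prod_ne_zero_iff.mpr fun i _ => Polynomial.X_sub_C_ne_zero _)]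
  simp [diagEntropy, Multiset.map_map]

/-- The doubly stochastic matrix `|U i j|²`. -/
noncomputable def transitionMatrix (U : Matrix ι ι ℂ) : Matrix ι ι ℝ :=
  Matrix.of fun i j => ‖U i j‖ ^ 2

lemma transitionMatrix_mem_doublyStochastic (hU : U ∈ Matrix.unitaryGroup ι ℂ) :
    transitionMatrix U ∈ doublyStochastic ℝ ι := by
  refine mem_doublyStochastic_iff_sum.mpr ⟨fun _ _ => sq_nonneg _, fun i => ?_, fun j => ?_⟩
  · have h := congrFun₂ (Matrix.mem_unitaryGroup_iff.mp hU) i i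
    simp only [Matrix.mul_apply, Matrix.star_apply, RCLike.star_def, Complex.mul_conj',
      Matrix.one_apply_eq] at h
    exact_mod_cast h
  · have h := congrFun₂ (Matrix.mem_unitaryGroup_iff'.mp hU) j j
    simp only [Matrix.mul_apply, Matrix.star_apply, RCLike.star_def, Complex.conj_mul',
      Matrix.one_apply_eq] at h
    exact_mod_cast h

lemma eq_eigenvectorUnitary_mul_diagonal_mul (hρ : ρ.IsHermitian) :
    ρ = (hρ.eigenvectorUnitary : Matrix ι ι ℂ) *
      Matrix.diagonal (fun i => (hρ.eigenvalues i : ℂ)) *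
      (hρ.eigenvectorUnitary : Matrix ι ι ℂ)ᴴ :=
  hρ.spectral_theorem

lemma exists_unitary_conj_isDiag (hρ : ρ.IsHermitian) :
    ∃ U ∈ Matrix.unitaryGroup ι ℂ, (Uᴴ * ρ * U).IsDiag := by
  set U : Matrix ι ι ℂ := (hρ.eigenvectorUnitary : Matrix ι ι ℂ) with hU
  have hUU : Uᴴ * U = 1 := Unitary.coe_star_mul_self hρ.eigenvectorUnitary
  refine ⟨U, SetLike.coe_mem _, ?_⟩
  rw [eq_eigenvectorUnitary_mul_diagonal_mul hρ, ← hU, mul_assoc, mul_assoc, hUU, mul_one,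
    ← mul_assoc, hUU, one_mul]
  exact Matrix.isDiag_diagonal _

lemma re_diag_eq_transitionMatrix_mulVec (hρ : ρ.IsHermitian) (i : ι) :
    (ρ i i).re = (transitionMatrix hρ.eigenvectorUnitary *ᵥ hρ.eigenvalues) i := by
  have h := congrFun₂ (eq_eigenvectorUnitary_mul_diagonal_mul hρ) i i
  rw [Matrix.mul_apply] at h
  rw [h, Complex.re_sum]
  refine Finset.sum_congr rfl fun j _ => ?_
  rw [Matrix.mul_diagonal, Matrix.conjTranspose_apply, mul_right_comm, RCLike.star_def,
    Complex.mul_conj']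
  simp [transitionMatrix, ← Complex.ofReal_pow]

lemma vnEntropy_le_diagEntropy (hρ : ρ.PosSemidef) : vnEntropy ρ ≤ diagEntropy ρ := by
  simp only [vnEntropy, hρ.isHermitian, dif_pos, diagEntropy,
    re_diag_eq_transitionMatrix_mulVec hρ.isHermitian]
  exact sum_map_le_sum_map_mulVec
    (transitionMatrix_mem_doublyStochastic (SetLike.coe_mem _)) Real.concaveOn_negMulLog
    hρ.eigenvalues_nonneg

lemma isDiag_of_vnEntropy_eq_diagEntropy (hρ : ρ.PosSemidef)
    (heq : vnEntropy ρ = diagEntropy ρ) : ρ.IsDiag := by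
  have hH := hρ.isHermitian
  set U := (hH.eigenvectorUnitary : Matrix ι ι ℂ) with hU
  have hUmem : U ∈ Matrix.unitaryGroup ι ℂ := SetLike.coe_mem _
  simp only [vnEntropy, hH, dif_pos, diagEntropy, re_diag_eq_transitionMatrix_mulVec hH] at heq
  have hentry : ∀ i j, U i j * hH.eigenvalues j = (ρ i i).re * U i j := fun i j => by
    by_cases hij : U i j = 0
    · simp [hij]
    · rw [re_diag_eq_transitionMatrix_mulVec hH, mul_comm, eq_mulVec_of_sum_map_eq_sum_map_mulVec
        (transitionMatrix_mem_doublyStochastic hUmem) Real.strictConcaveOn_negMulLog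
        hρ.eigenvalues_nonneg heq (by simpa [transitionMatrix] using hij)]
  have hcomm : U * Matrix.diagonal (fun j => (hH.eigenvalues j : ℂ)) =
      Matrix.diagonal (fun i => ((ρ i i).re : ℂ)) * U := by
    ext i j
    rw [Matrix.mul_diagonal, Matrix.diagonal_mul, hentry]
  rw [eq_eigenvectorUnitary_mul_diagonal_mul hH, ← hU, hcomm, mul_assoc,
    ← Matrix.star_eq_conjTranspose, Matrix.mem_unitaryGroup_iff.mp hUmem, mul_one]
  exact Matrix.isDiag_diagonal _

namespace IsDensity

lemma conj_unitary (hρ : IsDensity ρ) (hU : U ∈ Matrix.unitaryGroup ι ℂ) :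
    IsDensity (Uᴴ * ρ * U) := by
  refine ⟨hρ.1.conjTranspose_mul_mul_same U, ?_⟩
  rw [Matrix.trace_mul_cycle, ← Matrix.star_eq_conjTranspose, Matrix.mem_unitaryGroup_iff.mp hU,
    one_mul, hρ.2]

lemma vnEntropy_le_log_card [Nonempty ι] (hρ : IsDensity ρ) :
    vnEntropy ρ ≤ Real.log (Fintype.card ι) :=
  (vnEntropy_le_diagEntropy hρ.1).trans
    (sum_negMulLog_le_log_card hρ.re_diag_nonneg hρ.sum_re_diag)

lemma eq_smul_one_of_vnEntropy_eq [Nonempty ι] (hρ : IsDensity ρ)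
    (heq : vnEntropy ρ = Real.log (Fintype.card ι)) : ρ = (Fintype.card ι : ℂ)⁻¹ • 1 := by
  have hle : diagEntropy ρ ≤ Real.log (Fintype.card ι) :=
    sum_negMulLog_le_log_card hρ.re_diag_nonneg hρ.sum_re_diag
  have hdiag : vnEntropy ρ = diagEntropy ρ :=
    (vnEntropy_le_diagEntropy hρ.1).antisymm (hle.trans heq.ge)
  have hunif := eq_inv_card_of_sum_negMulLog_eq hρ.re_diag_nonneg hρ.sum_re_diag
    (hdiag.symm.trans heq)
  rw [← (isDiag_of_vnEntropy_eq_diagEntropy hρ.1 hdiag).diagonal_diag, Matrix.smul_one_eq_diagonal]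
  congr 1 with i
  rw [Matrix.diag_apply, ← hρ.ofReal_re_diag i, congrFun hunif i]
  push_cast
  rfl

end IsDensity

end VonNeumann

/-! ### Partial traces and subadditivity -/

section PartialTrace

variable {ι κ R : Type*} [Fintype κ] [CommSemiring R]

/-- The partial trace of a matrix on a product index type over the second factor. -/
def traceRight (ρ : Matrix (ι × κ) (ι × κ) R) : Matrix ι ι R :=
  Matrix.of fun i i' => ∑ k, ρ (i, k) (i', k)

/-- The partial trace of a matrix on a product index type over the first factor. -/
def traceLeft (ρ : Matrix (κ × ι) (κ × ι) R) : Matrix ι ι R :=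
  traceRight (ρ.submatrix Prod.swap Prod.swap)

lemma traceRight_apply (ρ : Matrix (ι × κ) (ι × κ) R) (i i' : ι) :
    traceRight ρ i i' = ∑ k, ρ (i, k) (i', k) := rfl

lemma traceLeft_apply (ρ : Matrix (κ × ι) (κ × ι) R) (i i' : ι) :
    traceLeft ρ i i' = ∑ k, ρ (k, i) (k, i') := rfl

lemma trace_traceRight [Fintype ι] (ρ : Matrix (ι × κ) (ι × κ) R) :
    (traceRight ρ).trace = ρ.trace := by
  simp [Matrix.trace, traceRight_apply, Fintype.sum_prod_type]

lemma traceRight_eq_sum_submatrix (ρ : Matrix (ι × κ) (ι × κ) R) :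
    traceRight ρ = ∑ k, ρ.submatrix (·, k) (·, k) := by
  ext i i'
  simp [traceRight_apply, Matrix.sum_apply]

lemma kronecker_submatrix_swap {ι κ : Type*} (V : Matrix ι ι R) (W : Matrix κ κ R) :
    (V ⊗ₖ W).submatrix Prod.swap Prod.swap = W ⊗ₖ V := by
  ext
  simp [mul_comm]

variable [Fintype ι]

lemma traceRight_one_kronecker_mul_comm [DecidableEq ι] (W : Matrix κ κ R)
    (ρ : Matrix (ι × κ) (ι × κ) R) :
    traceRight (((1 : Matrix ι ι R) ⊗ₖ W) * ρ) = traceRight (ρ * ((1 : Matrix ι ι R) ⊗ₖ W)) := by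
  ext i i'
  simp only [traceRight_apply, Matrix.mul_apply, Fintype.sum_prod_type_right,
    Matrix.kroneckerMap_apply, Matrix.one_apply, ite_mul, one_mul, zero_mul, mul_ite, mul_zero,
    Finset.sum_ite_eq, Finset.sum_ite_eq', Finset.mem_univ, if_true]
  rw [Finset.sum_comm]
  simp only [mul_comm]

variable [DecidableEq κ]

lemma traceRight_kronecker_one_mul (V : Matrix ι ι R) (ρ : Matrix (ι × κ) (ι × κ) R) :
    traceRight ((V ⊗ₖ (1 : Matrix κ κ R)) * ρ) = V * traceRight ρ := by
  ext i i'
  simp only [traceRight_apply, Matrix.mul_apply, Fintype.sum_prod_type, Matrix.kroneckerMap_apply,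
    Matrix.one_apply, mul_ite, mul_one, mul_zero, ite_mul, zero_mul, Finset.sum_ite_eq,
    Finset.mem_univ, if_true, Finset.mul_sum]
  rw [Finset.sum_comm]

lemma traceRight_mul_kronecker_one (V : Matrix ι ι R) (ρ : Matrix (ι × κ) (ι × κ) R) :
    traceRight (ρ * (V ⊗ₖ (1 : Matrix κ κ R))) = traceRight ρ * V := by
  ext i i'
  simp only [traceRight_apply, Matrix.mul_apply, Fintype.sum_prod_type, Matrix.kroneckerMap_apply,
    Matrix.one_apply, mul_ite, mul_one, mul_zero, Finset.sum_ite_eq', Finset.mem_univ, if_true,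
    Finset.sum_mul]
  rw [Finset.sum_comm]

end PartialTrace

section Subadditivity

variable {ι κ : Type} [Fintype ι] [Fintype κ] {ρ : Matrix (ι × κ) (ι × κ) ℂ}

lemma isDensity_traceRight (hρ : IsDensity ρ) : IsDensity (traceRight ρ) := by
  refine ⟨?_, (trace_traceRight ρ).trans hρ.2⟩
  rw [traceRight_eq_sum_submatrix]
  exact Matrix.posSemidef_sum _ fun k _ => hρ.1.submatrix _

lemma IsDensity.submatrix_equiv {ι κ : Type*} [Fintype ι] [Fintype κ] {ρ : Matrix ι ι ℂ}
    (hρ : IsDensity ρ) (e : κ ≃ ι) : IsDensity (ρ.submatrix e e) :=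
  ⟨hρ.1.submatrix e, by rw [← hρ.2]; exact e.sum_comp fun i => ρ i i⟩

lemma isDensity_traceLeft (hρ : IsDensity ρ) : IsDensity (traceLeft ρ) :=
  isDensity_traceRight (hρ.submatrix_equiv (Equiv.prodComm κ ι))

lemma IsDensity.diagEntropy_le_add (hρ : IsDensity ρ) :
    diagEntropy ρ ≤ diagEntropy (traceRight ρ) + diagEntropy (traceLeft ρ) :=
  sum_negMulLog_le_marginals hρ.re_diag_nonneg (fun _ => (Complex.re_sum _ _).symm)
    (fun _ => (Complex.re_sum _ _).symm) hρ.sum_re_diag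

lemma IsDensity.diag_eq_mul_of_diagEntropy_eq_add (hρ : IsDensity ρ)
    (heq : diagEntropy ρ = diagEntropy (traceRight ρ) + diagEntropy (traceLeft ρ)) (x : ι × κ) :
    ρ x x = traceRight ρ x.1 x.1 * traceLeft ρ x.2 x.2 := by
  have h := congrFun (eq_marginal_mul_of_sum_negMulLog_eq hρ.re_diag_nonneg
    (fun _ => (Complex.re_sum _ _).symm) (fun _ => (Complex.re_sum _ _).symm) hρ.sum_re_diag heq) x
  rw [← hρ.ofReal_re_diag, ← (isDensity_traceRight hρ).ofReal_re_diag,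
    ← (isDensity_traceLeft hρ).ofReal_re_diag, ← Complex.ofReal_mul]
  exact congrArg _ h

lemma conj_kronecker (V A : Matrix ι ι ℂ) (W B : Matrix κ κ ℂ) :
    (V ⊗ₖ W)ᴴ * (A ⊗ₖ B) * (V ⊗ₖ W) = (Vᴴ * A * V) ⊗ₖ (Wᴴ * B * W) := by
  rw [Matrix.conjTranspose_kronecker, ← Matrix.mul_kronecker_mul, ← Matrix.mul_kronecker_mul]

lemma IsDensity.diagEntropy_kronecker {A : Matrix ι ι ℂ} {B : Matrix κ κ ℂ} (hA : IsDensity A)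
    (hB : IsDensity B) : diagEntropy (A ⊗ₖ B) = diagEntropy A + diagEntropy B := by
  rw [diagEntropy, diagEntropy, diagEntropy, ← sum_negMulLog_mul hA.sum_re_diag hB.sum_re_diag]
  refine Finset.sum_congr rfl fun x _ => ?_
  rw [Matrix.kroneckerMap_apply, ← hA.ofReal_re_diag, ← hB.ofReal_re_diag, ← Complex.ofReal_mul,
    Complex.ofReal_re, Complex.ofReal_re, Complex.ofReal_re]

variable {V : Matrix ι ι ℂ} {W : Matrix κ κ ℂ}

lemma traceRight_conj_kronecker [DecidableEq κ] (ρ : Matrix (ι × κ) (ι × κ) ℂ)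
    (V : Matrix ι ι ℂ) (hW : W ∈ Matrix.unitaryGroup κ ℂ) :
    traceRight ((V ⊗ₖ W)ᴴ * ρ * (V ⊗ₖ W)) = Vᴴ * traceRight ρ * V := by
  classical
  have hsplit : V ⊗ₖ W = ((1 : Matrix ι ι ℂ) ⊗ₖ W) * (V ⊗ₖ (1 : Matrix κ κ ℂ)) := by
    rw [← Matrix.mul_kronecker_mul, one_mul, mul_one]
  have hcancel : ((1 : Matrix ι ι ℂ) ⊗ₖ W) * ((1 : Matrix ι ι ℂ) ⊗ₖ Wᴴ) = 1 := by
    rw [← Matrix.mul_kronecker_mul, one_mul, ← Matrix.star_eq_conjTranspose,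
      Matrix.mem_unitaryGroup_iff.mp hW, Matrix.one_kronecker_one]
  rw [hsplit, Matrix.conjTranspose_mul, Matrix.conjTranspose_kronecker,
    Matrix.conjTranspose_kronecker, Matrix.conjTranspose_one, Matrix.conjTranspose_one, ← mul_assoc,
    traceRight_mul_kronecker_one, mul_assoc (Vᴴ ⊗ₖ _), mul_assoc (Vᴴ ⊗ₖ _),
    traceRight_kronecker_one_mul, mul_assoc (1 ⊗ₖ Wᴴ), traceRight_one_kronecker_mul_comm,
    mul_assoc ρ, hcancel, mul_one]

lemma traceLeft_conj_kronecker [DecidableEq ι] (ρ : Matrix (ι × κ) (ι × κ) ℂ)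
    (W : Matrix κ κ ℂ) (hV : V ∈ Matrix.unitaryGroup ι ℂ) :
    traceLeft ((V ⊗ₖ W)ᴴ * ρ * (V ⊗ₖ W)) = Wᴴ * traceLeft ρ * W := by
  rw [traceLeft, traceLeft, ← traceRight_conj_kronecker _ W hV, ← kronecker_submatrix_swap V W,
    Matrix.conjTranspose_submatrix]
  rw [Matrix.submatrix_mul _ _ _ _ _ Prod.swap_bijective,
    Matrix.submatrix_mul _ _ _ _ _ Prod.swap_bijective]

variable [DecidableEq ι] [DecidableEq κ]

lemma vnEntropy_eq_diagEntropy_conj {ρ : Matrix ι ι ℂ} (hρ : ρ.IsHermitian)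
    (hV : V ∈ Matrix.unitaryGroup ι ℂ) (hd : (Vᴴ * ρ * V).IsDiag) :
    vnEntropy ρ = diagEntropy (Vᴴ * ρ * V) := by
  rw [← vnEntropy_conj_unitary hρ hV,
    vnEntropy_eq_diagEntropy (Matrix.isHermitian_conjTranspose_mul_mul V hρ) hd]

lemma eq_of_conj_unitary_eq {ρ σ : Matrix ι ι ℂ} (hV : V ∈ Matrix.unitaryGroup ι ℂ)
    (h : Vᴴ * ρ * V = Vᴴ * σ * V) : ρ = σ := by
  have hVV : V * Vᴴ = 1 := Matrix.mem_unitaryGroup_iff.mp hV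
  have hundo : ∀ τ : Matrix ι ι ℂ, V * (Vᴴ * τ * V) * Vᴴ = τ := fun τ => by
    rw [mul_assoc, mul_assoc (Vᴴ * τ), hVV, mul_one, ← mul_assoc, hVV, one_mul]
  rw [← hundo ρ, h, hundo σ]

lemma IsDensity.vnEntropy_kronecker {A : Matrix ι ι ℂ} {B : Matrix κ κ ℂ} (hA : IsDensity A)
    (hB : IsDensity B) : vnEntropy (A ⊗ₖ B) = vnEntropy A + vnEntropy B := by
  obtain ⟨V, hV, hVd⟩ := exists_unitary_conj_isDiag hA.1.isHermitian
  obtain ⟨W, hW, hWd⟩ := exists_unitary_conj_isDiag hB.1.isHermitian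
  have hd : ((V ⊗ₖ W)ᴴ * (A ⊗ₖ B) * (V ⊗ₖ W)).IsDiag := by
    rw [conj_kronecker]
    exact hVd.kronecker hWd
  rw [vnEntropy_eq_diagEntropy_conj (hA.1.kronecker hB.1).isHermitian
      (Matrix.kronecker_mem_unitary hV hW) hd, conj_kronecker,
    (hA.conj_unitary hV).diagEntropy_kronecker (hB.conj_unitary hW),
    vnEntropy_eq_diagEntropy_conj hA.1.isHermitian hV hVd,
    vnEntropy_eq_diagEntropy_conj hB.1.isHermitian hW hWd]

namespace IsDensity

lemma vnEntropy_le_add (hρ : IsDensity ρ) :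
    vnEntropy ρ ≤ vnEntropy (traceRight ρ) + vnEntropy (traceLeft ρ) := by
  obtain ⟨V, hV, hVd⟩ := exists_unitary_conj_isDiag (isDensity_traceRight hρ).1.isHermitian
  obtain ⟨W, hW, hWd⟩ := exists_unitary_conj_isDiag (isDensity_traceLeft hρ).1.isHermitian
  have hVW := Matrix.kronecker_mem_unitary hV hW
  have hσ := hρ.conj_unitary hVW
  rw [← vnEntropy_conj_unitary hρ.1.isHermitian hVW,
    vnEntropy_eq_diagEntropy_conj (isDensity_traceRight hρ).1.isHermitian hV hVd,
    vnEntropy_eq_diagEntropy_conj (isDensity_traceLeft hρ).1.isHermitian hW hWd,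
    ← traceRight_conj_kronecker ρ V hW, ← traceLeft_conj_kronecker ρ W hV]
  exact (vnEntropy_le_diagEntropy hσ.1).trans hσ.diagEntropy_le_add

lemma eq_kronecker_of_vnEntropy_eq_diagEntropy_add (hρ : IsDensity ρ)
    (heq : vnEntropy ρ = diagEntropy (traceRight ρ) + diagEntropy (traceLeft ρ))
    (hR : (traceRight ρ).IsDiag) (hL : (traceLeft ρ).IsDiag) :
    ρ = traceRight ρ ⊗ₖ traceLeft ρ := by
  have hdiag : vnEntropy ρ = diagEntropy ρ :=
    (vnEntropy_le_diagEntropy hρ.1).antisymm (hρ.diagEntropy_le_add.trans heq.ge)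
  have hρd := isDiag_of_vnEntropy_eq_diagEntropy hρ.1 hdiag
  ext x y
  by_cases hxy : x = y
  · rw [← hxy, hρ.diag_eq_mul_of_diagEntropy_eq_add (hdiag.symm.trans heq),
      Matrix.kroneckerMap_apply]
  · rw [hρd hxy, (hR.kronecker hL) hxy]

lemma eq_kronecker_of_vnEntropy_eq_add (hρ : IsDensity ρ)
    (heq : vnEntropy ρ = vnEntropy (traceRight ρ) + vnEntropy (traceLeft ρ)) :
    ρ = traceRight ρ ⊗ₖ traceLeft ρ := by
  obtain ⟨V, hV, hVd⟩ := exists_unitary_conj_isDiag (isDensity_traceRight hρ).1.isHermitian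
  obtain ⟨W, hW, hWd⟩ := exists_unitary_conj_isDiag (isDensity_traceLeft hρ).1.isHermitian
  have hVW := Matrix.kronecker_mem_unitary hV hW
  refine eq_of_conj_unitary_eq hVW ?_
  rw [← vnEntropy_conj_unitary hρ.1.isHermitian hVW,
    vnEntropy_eq_diagEntropy_conj (isDensity_traceRight hρ).1.isHermitian hV hVd,
    vnEntropy_eq_diagEntropy_conj (isDensity_traceLeft hρ).1.isHermitian hW hWd] at heq
  rw [conj_kronecker]
  rw [← traceRight_conj_kronecker ρ V hW] at heq hVd ⊢
  rw [← traceLeft_conj_kronecker ρ W hV] at heq hWd ⊢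
  exact (hρ.conj_unitary hVW).eq_kronecker_of_vnEntropy_eq_diagEntropy_add heq hVd hWd

end IsDensity

end Subadditivity

/-! ### Reduced states of pure states -/

section ReducedState

variable {m : ℕ} {ψ : (Fin m → Fin 2) → ℂ} {X Y : Finset (Fin m)}

/-- Bit strings on `A` and on its complement are the same as full bit strings. -/
def glueEquiv (A : Finset (Fin m)) :
    ((A → Fin 2) × ((Aᶜ : Finset (Fin m)) → Fin 2)) ≃ (Fin m → Fin 2) where
  toFun p := glue A p.1 p.2
  invFun x := (A.restrict x, Aᶜ.restrict x)
  left_inv p := by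
    ext i
    · simp [glue]
    · simp [glue, Finset.mem_compl.mp i.2]
  right_inv x := by
    ext i
    simp [glue]

lemma restrict_glue (A : Finset (Fin m)) (u : A → Fin 2) (w : (Aᶜ : Finset (Fin m)) → Fin 2) :
    A.restrict (glue A u w) = u :=
  congrArg Prod.fst ((glueEquiv A).left_inv (u, w))

lemma updateFinset_glue (A : Finset (Fin m)) (u v : A → Fin 2)
    (w : (Aᶜ : Finset (Fin m)) → Fin 2) :
    Function.updateFinset (glue A u w) A v = glue A v w := by
  ext i
  by_cases hi : i ∈ A <;> simp [Function.updateFinset, glue, hi]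

lemma reducedDensity_apply (ψ : (Fin m → Fin 2) → ℂ) (A : Finset (Fin m)) (u v : A → Fin 2) :
    reducedDensity ψ A u v = ∑ x, if A.restrict x = u then
      ψ x * (starRingEnd ℂ) (ψ (Function.updateFinset x A v)) else 0 := by
  rw [← (glueEquiv A).sum_comp, Fintype.sum_prod_type]
  simp only [glueEquiv, Equiv.coe_fn_mk, restrict_glue, updateFinset_glue,
    Finset.sum_ite_irrel, Finset.sum_const_zero, Finset.sum_ite_eq', Finset.mem_univ, if_true,
    reducedDensity]

/-- The amplitudes of `ψ` as a matrix, with rows indexed by the bits in `A` and columns by the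
remaining bits. -/
def amplitudeMatrix (ψ : (Fin m → Fin 2) → ℂ) (A : Finset (Fin m)) :
    Matrix (A → Fin 2) ((Aᶜ : Finset (Fin m)) → Fin 2) ℂ :=
  Matrix.of fun u w => ψ (glue A u w)

lemma reducedDensity_eq_mul_conjTranspose (ψ : (Fin m → Fin 2) → ℂ) (A : Finset (Fin m)) :
    reducedDensity ψ A = amplitudeMatrix ψ A * (amplitudeMatrix ψ A)ᴴ := by
  ext u v
  simp [reducedDensity, amplitudeMatrix, Matrix.mul_apply]

lemma isDensity_reducedDensity (hψ : ∑ x, ‖ψ x‖ ^ 2 = 1) (A : Finset (Fin m)) :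
    IsDensity (reducedDensity ψ A) := by
  constructor
  · rw [reducedDensity_eq_mul_conjTranspose]
    exact Matrix.posSemidef_self_mul_conjTranspose _
  · simp only [Matrix.trace, Matrix.diag_apply, reducedDensity_apply]
    rw [Finset.sum_comm]
    simp only [Finset.sum_ite_eq, Finset.mem_univ, if_true, Function.updateFinset_restrict,
      Complex.mul_conj']
    exact_mod_cast hψ

lemma reducedDensity_compl (ψ : (Fin m → Fin 2) → ℂ) (A : Finset (Fin m)) :
    reducedDensity ψ Aᶜ = ((amplitudeMatrix ψ A)ᴴ * amplitudeMatrix ψ A)ᵀ := by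
  have hmem : ∀ i, i ∈ Aᶜᶜ ↔ i ∈ A := by simp
  let e : ((Aᶜᶜ : Finset (Fin m)) → Fin 2) ≃ (A → Fin 2) :=
    Equiv.arrowCongr (Equiv.subtypeEquivRight hmem) (Equiv.refl _)
  have hglue : ∀ w u, glue Aᶜ w u = glue A (e u) w := fun w u => by
    ext i
    by_cases hi : i ∈ A
    · simp [glue, hi, e]
      rfl
    · simp [glue, hi]
  ext w w'
  rw [Matrix.transpose_apply, Matrix.mul_apply]
  refine Fintype.sum_equiv e _ _ fun u => ?_
  rw [hglue, hglue, Matrix.conjTranspose_apply, mul_comm]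
  rfl

lemma Sent_compl (ψ : (Fin m → Fin 2) → ℂ) (A : Finset (Fin m)) : Sent ψ Aᶜ = Sent ψ A := by
  rw [Sent, Sent, reducedDensity_compl,
    vnEntropy_transpose (Matrix.isHermitian_conjTranspose_mul_self _),
    ← vnEntropy_mul_conjTranspose_self, reducedDensity_eq_mul_conjTranspose]

lemma card_bits (X : Finset (Fin m)) : Fintype.card (X → Fin 2) = 2 ^ X.card := by simp

lemma log_card_bits (X : Finset (Fin m)) :
    Real.log (Fintype.card (X → Fin 2)) = X.card * Real.log 2 := by
  rw [card_bits, Nat.cast_pow, Real.log_pow, Nat.cast_ofNat]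

lemma Sent_le_card_mul_log_two (hψ : ∑ x, ‖ψ x‖ ^ 2 = 1) (X : Finset (Fin m)) :
    Sent ψ X ≤ X.card * Real.log 2 :=
  (isDensity_reducedDensity hψ X).vnEntropy_le_log_card.trans_eq (log_card_bits X)

lemma maximallyMixed_of_Sent_eq (hψ : ∑ x, ‖ψ x‖ ^ 2 = 1)
    (hX : Sent ψ X = X.card * Real.log 2) : MaximallyMixed ψ X := by
  have h := (isDensity_reducedDensity hψ X).eq_smul_one_of_vnEntropy_eq
    (hX.trans (log_card_bits X).symm)
  rwa [card_bits, Nat.cast_pow, Nat.cast_ofNat] at h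

/-- The reduced state of `ψ` on `X ∪ Y`, with bit strings on `X ∪ Y` split into a part on `X` and a
part on `Y`. -/
def jointDensity (ψ : (Fin m → Fin 2) → ℂ) (hXY : Disjoint X Y) :
    Matrix ((X → Fin 2) × (Y → Fin 2)) ((X → Fin 2) × (Y → Fin 2)) ℂ :=
  (reducedDensity ψ (X ∪ Y)).submatrix (Equiv.piFinsetUnion (fun _ => Fin 2) hXY)
    (Equiv.piFinsetUnion (fun _ => Fin 2) hXY)

lemma vnEntropy_jointDensity (hψ : ∑ x, ‖ψ x‖ ^ 2 = 1) (hXY : Disjoint X Y) :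
    vnEntropy (jointDensity ψ hXY) = Sent ψ (X ∪ Y) :=
  vnEntropy_submatrix_equiv (isDensity_reducedDensity hψ _).1.1 _

lemma restrict_eq_piFinsetUnion_iff (hXY : Disjoint X Y) (x : Fin m → Fin 2)
    (u : X → Fin 2) (w : Y → Fin 2) :
    (X ∪ Y).restrict x = Equiv.piFinsetUnion (fun _ => Fin 2) hXY (u, w) ↔
      X.restrict x = u ∧ Y.restrict x = w := by
  refine ⟨fun h => ⟨funext fun i => ?_, funext fun i => ?_⟩, fun h => funext fun ⟨i, hi⟩ => ?_⟩
  · have hi := Finset.mem_union_left Y i.2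
    exact (congrFun h ⟨i, hi⟩).trans (Equiv.piFinsetUnion_left _ hXY i.2 hi)
  · have hi := Finset.mem_union_right X i.2
    exact (congrFun h ⟨i, hi⟩).trans (Equiv.piFinsetUnion_right _ hXY i.2 hi)
  · obtain hX | hY := Finset.mem_union.mp hi
    · exact (congrFun h.1 ⟨i, hX⟩).trans (Equiv.piFinsetUnion_left (fun _ => Fin 2) hXY hX hi).symm
    · exact (congrFun h.2 ⟨i, hY⟩).trans (Equiv.piFinsetUnion_right (fun _ => Fin 2) hXY hY hi).symm

lemma restrict_updateFinset_of_disjoint (hXY : Disjoint X Y) (x : Fin m → Fin 2) (w : Y → Fin 2) :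
    X.restrict (Function.updateFinset x Y w) = X.restrict x :=
  funext fun i => dif_neg (Finset.disjoint_left.mp hXY i.2)

lemma traceRight_jointDensity (ψ : (Fin m → Fin 2) → ℂ) (hXY : Disjoint X Y) :
    traceRight (jointDensity ψ hXY) = reducedDensity ψ X := by
  ext u v
  have hupdate : ∀ x : Fin m → Fin 2, Function.updateFinset x (X ∪ Y)
      (Equiv.piFinsetUnion (fun _ => Fin 2) hXY (v, Y.restrict x)) =
        Function.updateFinset x X v := fun x => by
    rw [← Function.updateFinset_updateFinset hXY,
      ← restrict_updateFinset_of_disjoint hXY.symm x v, Function.updateFinset_restrict]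
  simp only [traceRight_apply, jointDensity, Matrix.submatrix_apply, reducedDensity_apply,
    restrict_eq_piFinsetUnion_iff, ite_and]
  rw [Finset.sum_comm]
  refine Finset.sum_congr rfl fun x _ => ?_
  rw [Finset.sum_ite_irrel, Finset.sum_ite_eq, if_pos (Finset.mem_univ _), hupdate,
    Finset.sum_const_zero]

lemma traceLeft_jointDensity (ψ : (Fin m → Fin 2) → ℂ) (hXY : Disjoint X Y) :
    traceLeft (jointDensity ψ hXY) = reducedDensity ψ Y := by
  ext u v
  have hupdate : ∀ x : Fin m → Fin 2, Function.updateFinset x (X ∪ Y)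
      (Equiv.piFinsetUnion (fun _ => Fin 2) hXY (X.restrict x, v)) =
        Function.updateFinset x Y v := fun x => by
    rw [← Function.updateFinset_updateFinset hXY, Function.updateFinset_restrict]
  simp only [traceLeft_apply, jointDensity, Matrix.submatrix_apply, reducedDensity_apply,
    restrict_eq_piFinsetUnion_iff, ite_and]
  rw [Finset.sum_comm]
  refine Finset.sum_congr rfl fun x _ => ?_
  rw [Finset.sum_ite_eq, if_pos (Finset.mem_univ _), hupdate]

lemma Sent_union_le (hψ : ∑ x, ‖ψ x‖ ^ 2 = 1) (hXY : Disjoint X Y) :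
    Sent ψ (X ∪ Y) ≤ Sent ψ X + Sent ψ Y := by
  have h := ((isDensity_reducedDensity hψ (X ∪ Y)).submatrix_equiv
    (Equiv.piFinsetUnion (fun _ => Fin 2) hXY)).vnEntropy_le_add
  rwa [← jointDensity, traceRight_jointDensity, traceLeft_jointDensity,
    vnEntropy_jointDensity hψ] at h

lemma Sent_empty (hψ : ∑ x, ‖ψ x‖ ^ 2 = 1) : Sent ψ ∅ = 0 := by
  have hle := Sent_le_card_mul_log_two hψ ∅
  have hsub := Sent_union_le hψ (Finset.disjoint_empty_left ∅)
  rw [Finset.card_empty, Nat.cast_zero, zero_mul] at hle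
  rw [Finset.empty_union] at hsub
  linarith

/-- The matrix entry of the reduced state on `A` at the restrictions of two full bit strings.
Indexing by full strings lets reduced states on different sets be compared without casts. -/
def reducedKernel (ψ : (Fin m → Fin 2) → ℂ) (A : Finset (Fin m)) (x y : Fin m → Fin 2) : ℂ :=
  reducedDensity ψ A (A.restrict x) (A.restrict y)

lemma reducedKernel_updateFinset_of_disjoint (hXY : Disjoint X Y) (x y : Fin m → Fin 2)
    (w w' : Y → Fin 2) :
    reducedKernel ψ X (Function.updateFinset x Y w) (Function.updateFinset y Y w') =
      reducedKernel ψ X x y := by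
  simp only [reducedKernel, restrict_updateFinset_of_disjoint hXY]

lemma sum_reducedKernel_union (hXY : Disjoint X Y) (x y : Fin m → Fin 2) :
    ∑ w : Y → Fin 2, reducedKernel ψ (X ∪ Y) (Function.updateFinset x Y w)
      (Function.updateFinset y Y w) = reducedKernel ψ X x y := by
  have hrestrict : ∀ (x : Fin m → Fin 2) (w : Y → Fin 2),
      (X ∪ Y).restrict (Function.updateFinset x Y w) =
        Equiv.piFinsetUnion (fun _ => Fin 2) hXY (X.restrict x, w) := fun x w =>
    (restrict_eq_piFinsetUnion_iff hXY _ _ _).mpr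
      ⟨restrict_updateFinset_of_disjoint hXY x w, Function.restrict_updateFinset x w⟩
  simp only [reducedKernel, hrestrict, ← traceRight_jointDensity ψ hXY]
  rfl

/-- The reduced state on `X ∪ Y` is the product of the reduced states on `X` and on `Y`. -/
def Uncorrelated (ψ : (Fin m → Fin 2) → ℂ) (X Y : Finset (Fin m)) : Prop :=
  ∀ x y, reducedKernel ψ (X ∪ Y) x y = reducedKernel ψ X x y * reducedKernel ψ Y x y

lemma Uncorrelated.mono_right {Y' : Finset (Fin m)} (h : Uncorrelated ψ X Y)
    (hXY : Disjoint X Y) (hY' : Y' ⊆ Y) : Uncorrelated ψ X Y' := fun x y => by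
  have hXD : Disjoint X (Y \ Y') := hXY.mono_right Finset.sdiff_subset
  have hYD : Disjoint Y' (Y \ Y') := Finset.disjoint_sdiff
  have hY : Y' ∪ Y \ Y' = Y := Finset.union_sdiff_of_subset hY'
  rw [← sum_reducedKernel_union (Finset.disjoint_union_left.mpr ⟨hXD, hYD⟩), Finset.union_assoc,
    ← sum_reducedKernel_union hYD, Finset.mul_sum, hY]
  refine Finset.sum_congr rfl fun w _ => ?_
  rw [h, reducedKernel_updateFinset_of_disjoint hXD]

lemma jointDensity_eq_kronecker_iff (hXY : Disjoint X Y) :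
    jointDensity ψ hXY = reducedDensity ψ X ⊗ₖ reducedDensity ψ Y ↔ Uncorrelated ψ X Y := by
  have hrestrict : ∀ x : Fin m → Fin 2, (X ∪ Y).restrict x =
      Equiv.piFinsetUnion (fun _ => Fin 2) hXY (X.restrict x, Y.restrict x) := fun x =>
    (restrict_eq_piFinsetUnion_iff hXY _ _ _).mpr ⟨rfl, rfl⟩
  have hsurj : ∀ p : (X → Fin 2) × (Y → Fin 2), ∃ x : Fin m → Fin 2,
      (X.restrict x, Y.restrict x) = p := by
    rintro ⟨u, w⟩
    refine ⟨Function.updateFinset (Function.updateFinset 0 X u) Y w, ?_⟩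
    rw [restrict_updateFinset_of_disjoint hXY, Function.restrict_updateFinset,
      Function.restrict_updateFinset]
  constructor
  · intro h x y
    rw [reducedKernel, hrestrict, hrestrict]
    exact congrFun₂ h _ _
  · intro h
    ext p q
    obtain ⟨x, rfl⟩ := hsurj p
    obtain ⟨y, rfl⟩ := hsurj q
    rw [jointDensity, Matrix.submatrix_apply, ← hrestrict, ← hrestrict]
    exact h x y

lemma Sent_union_eq_add_iff (hψ : ∑ x, ‖ψ x‖ ^ 2 = 1) (hXY : Disjoint X Y) :
    Sent ψ (X ∪ Y) = Sent ψ X + Sent ψ Y ↔ Uncorrelated ψ X Y := by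
  rw [← jointDensity_eq_kronecker_iff hXY, ← vnEntropy_jointDensity hψ hXY]
  constructor
  · intro h
    have hprod := ((isDensity_reducedDensity hψ (X ∪ Y)).submatrix_equiv
      (Equiv.piFinsetUnion (fun _ => Fin 2) hXY)).eq_kronecker_of_vnEntropy_eq_add
    rw [← jointDensity, traceRight_jointDensity, traceLeft_jointDensity] at hprod
    exact hprod h
  · intro h
    rw [h]
    exact (isDensity_reducedDensity hψ X).vnEntropy_kronecker (isDensity_reducedDensity hψ Y)

lemma Sent_union_eq_add_mono_right {Y' : Finset (Fin m)} (hψ : ∑ x, ‖ψ x‖ ^ 2 = 1)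
    (hXY : Disjoint X Y) (hY' : Y' ⊆ Y) (h : Sent ψ (X ∪ Y) = Sent ψ X + Sent ψ Y) :
    Sent ψ (X ∪ Y') = Sent ψ X + Sent ψ Y' :=
  (Sent_union_eq_add_iff hψ (hXY.mono_right hY')).mpr
    (((Sent_union_eq_add_iff hψ hXY).mp h).mono_right hXY hY')

lemma Sent_eq_card_mul_log_two_mono (hψ : ∑ x, ‖ψ x‖ ^ 2 = 1) (hXY : X ⊆ Y)
    (hY : Sent ψ Y = Y.card * Real.log 2) : Sent ψ X = X.card * Real.log 2 := by
  have hsplit := Sent_union_le hψ (Finset.disjoint_sdiff (s := X) (t := Y))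
  have hcard : (Y.card : ℝ) = X.card + (Y \ X).card := by
    rw [add_comm]
    exact_mod_cast (Finset.card_sdiff_add_card_eq_card hXY).symm
  rw [Finset.union_sdiff_of_subset hXY, hY, hcard] at hsplit
  have hX := Sent_le_card_mul_log_two hψ X
  have hYX := Sent_le_card_mul_log_two hψ (Y \ X)
  linarith

end ReducedState

/-! ### The shadow inequality and absolutely maximally entangled states -/

section Shadow

/-- The permutation of pairs of functions exchanging their values on `X`. -/
def swapOn {α β : Type*} [DecidableEq α] (X : Finset α) : Equiv.Perm ((α → β) × (α → β)) :=
  Function.Involutive.toPerm (fun p => (X.piecewise p.2 p.1, X.piecewise p.1 p.2)) fun p => by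
    ext i <;> by_cases hi : i ∈ X <;> simp [hi]

lemma swapOn_apply {α β : Type*} [DecidableEq α] (X : Finset α) (p : (α → β) × (α → β)) :
    swapOn X p = (X.piecewise p.2 p.1, X.piecewise p.1 p.2) := rfl

lemma swapOn_swapOn {α β : Type*} [DecidableEq α] (X Y : Finset α) (p : (α → β) × (α → β)) :
    swapOn Y (swapOn X p) = swapOn (symmDiff X Y) p := by
  ext i <;> by_cases hX : i ∈ X <;> by_cases hY : i ∈ Y <;>
    simp [swapOn_apply, hX, hY, Finset.piecewise, Finset.mem_symmDiff]

lemma neg_one_pow_card_symmDiff {α : Type*} [DecidableEq α] (X Y : Finset α) :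
    (-1 : ℂ) ^ (symmDiff X Y).card = (-1) ^ X.card * (-1) ^ Y.card := by
  have hcard : (symmDiff X Y).card = (X \ Y).card + (Y \ X).card := by
    rw [symmDiff_def, Finset.sup_eq_union, Finset.card_union_of_disjoint disjoint_sdiff_sdiff]
  rw [hcard, ← Finset.card_sdiff_add_card_inter X Y, ← Finset.card_sdiff_add_card_inter Y X,
    Finset.inter_comm Y X]
  have hsq : (-1 : ℂ) ^ (X ∩ Y).card * (-1) ^ (X ∩ Y).card = 1 := by
    rw [← pow_add, Even.neg_one_pow (Even.add_self _)]
  simp only [pow_add]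
  linear_combination (-(-1) ^ (X \ Y).card * (-1) ^ (Y \ X).card) * hsq

variable {m : ℕ} {ψ : (Fin m → Fin 2) → ℂ} {X : Finset (Fin m)}

/-- The purity `Tr ρ_X²` of the reduced state on `X`. -/
noncomputable def purity (ψ : (Fin m → Fin 2) → ℂ) (X : Finset (Fin m)) : ℂ :=
  (reducedDensity ψ X * reducedDensity ψ X).trace

/-- The amplitudes of two copies of `ψ`. -/
def pairAmplitude (ψ : (Fin m → Fin 2) → ℂ) (p : (Fin m → Fin 2) × (Fin m → Fin 2)) : ℂ :=
  ψ p.1 * ψ p.2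

lemma updateFinset_restrict_eq_piecewise (X : Finset (Fin m)) (x y : Fin m → Fin 2) :
    Function.updateFinset x X (X.restrict y) = X.piecewise y x := by
  ext i
  by_cases hi : i ∈ X <;> simp [Function.updateFinset, hi]

lemma sum_sum_ite_restrict_eq (X : Finset (Fin m)) (f : (X → Fin 2) → (Fin m → Fin 2) → ℂ) :
    ∑ u, ∑ x, (if X.restrict x = u then f u x else 0) = ∑ x, f (X.restrict x) x := by
  rw [Finset.sum_comm]
  simp only [Finset.sum_ite_eq, Finset.mem_univ, if_true]

lemma purity_eq_sum_swapOn (ψ : (Fin m → Fin 2) → ℂ) (X : Finset (Fin m)) :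
    purity ψ X = ∑ p, pairAmplitude ψ p * (starRingEnd ℂ) (pairAmplitude ψ (swapOn X p)) := by
  calc purity ψ X
      = ∑ u, ∑ v, reducedDensity ψ X u v * reducedDensity ψ X v u := by
        simp only [purity, Matrix.trace, Matrix.diag_apply, Matrix.mul_apply]
    _ = ∑ u, ∑ y, reducedDensity ψ X u (X.restrict y) *
          (ψ y * (starRingEnd ℂ) (ψ (Function.updateFinset y X u))) := by
        refine Finset.sum_congr rfl fun u _ => ?_
        rw [← sum_sum_ite_restrict_eq X fun v y => reducedDensity ψ X u v *
          (ψ y * (starRingEnd ℂ) (ψ (Function.updateFinset y X u)))]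
        simp only [reducedDensity_apply ψ X _ u, Finset.mul_sum, mul_ite, mul_zero]
    _ = ∑ y, ∑ x, ψ x * (starRingEnd ℂ) (ψ (X.piecewise y x)) *
          (ψ y * (starRingEnd ℂ) (ψ (X.piecewise x y))) := by
        rw [Finset.sum_comm]
        refine Finset.sum_congr rfl fun y _ => ?_
        simp only [reducedDensity_apply, Finset.sum_mul, ite_mul, zero_mul,
          updateFinset_restrict_eq_piecewise]
        rw [sum_sum_ite_restrict_eq]
        simp only [updateFinset_restrict_eq_piecewise]
    _ = _ := by
        rw [Fintype.sum_prod_type_right]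
        refine Finset.sum_congr rfl fun y _ => Finset.sum_congr rfl fun x _ => ?_
        simp only [pairAmplitude, swapOn_apply, map_mul]
        ring

lemma purity_compl (ψ : (Fin m → Fin 2) → ℂ) (X : Finset (Fin m)) :
    purity ψ Xᶜ = purity ψ X := by
  rw [purity_eq_sum_swapOn, purity_eq_sum_swapOn]
  refine Finset.sum_congr rfl fun p _ => ?_
  rw [swapOn_apply, swapOn_apply, Finset.piecewise_compl, Finset.piecewise_compl,
    pairAmplitude, pairAmplitude, pairAmplitude, mul_comm (ψ (X.piecewise p.1 p.2))]

lemma MaximallyMixed.purity_eq (h : MaximallyMixed ψ X) : purity ψ X = (2 ^ X.card)⁻¹ := by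
  rw [purity, h, Matrix.smul_mul, Matrix.one_mul, Matrix.trace_smul, Matrix.trace_smul,
    Matrix.trace_one, card_bits]
  simp

lemma sum_pairAmplitude_swapOn (ψ : (Fin m → Fin 2) → ℂ) (X Y : Finset (Fin m)) :
    ∑ p, pairAmplitude ψ (swapOn X p) * (starRingEnd ℂ) (pairAmplitude ψ (swapOn Y p)) =
      purity ψ (symmDiff X Y) := by
  rw [purity_eq_sum_swapOn, ← Equiv.sum_comp (swapOn X) fun p => pairAmplitude ψ p * _]
  simp only [swapOn_swapOn, symmDiff_symmDiff_cancel_left]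

lemma sum_sum_purity_symmDiff (ψ : (Fin m → Fin 2) → ℂ) :
    ∑ X : Finset (Fin m), ∑ Y : Finset (Fin m),
      (-1) ^ X.card * (-1) ^ Y.card * purity ψ (symmDiff X Y) =
        2 ^ m * ∑ X : Finset (Fin m), (-1) ^ X.card * purity ψ X := by
  have hrow : ∀ X : Finset (Fin m), ∑ Y : Finset (Fin m),
      (-1) ^ X.card * (-1) ^ Y.card * purity ψ (symmDiff X Y) =
        ∑ Z : Finset (Fin m), (-1) ^ Z.card * purity ψ Z := fun X => by
    simp only [← neg_one_pow_card_symmDiff]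
    exact Equiv.sum_comp
      (Function.Involutive.toPerm (symmDiff X) (symmDiff_symmDiff_cancel_left X))
      fun Z => (-1 : ℂ) ^ Z.card * purity ψ Z
  simp [hrow]

-- Rains' shadow inequality: up to the factor `2 ^ m`, the alternating sum is the squared norm of
-- the projection of `ψ ⊗ ψ` to the vectors that are antisymmetric at every position.
theorem sum_neg_one_pow_mul_purity_nonneg (ψ : (Fin m → Fin 2) → ℂ) :
    0 ≤ ∑ X : Finset (Fin m), (-1) ^ X.card * purity ψ X := by
  let antisymmetrized : (Fin m → Fin 2) × (Fin m → Fin 2) → ℂ := fun p =>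
    ∑ X : Finset (Fin m), (-1) ^ X.card * pairAmplitude ψ (swapOn X p)
  have hnorm : ∑ p, antisymmetrized p * (starRingEnd ℂ) (antisymmetrized p) =
      2 ^ m * ∑ X : Finset (Fin m), (-1) ^ X.card * purity ψ X := by
    rw [← sum_sum_purity_symmDiff]
    simp only [antisymmetrized, map_sum, Finset.sum_mul_sum, map_mul, map_pow, map_neg, map_one]
    rw [Finset.sum_comm]
    refine Finset.sum_congr rfl fun X _ => ?_
    rw [Finset.sum_comm]
    refine Finset.sum_congr rfl fun Y _ => ?_
    rw [← sum_pairAmplitude_swapOn, Finset.mul_sum]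
    exact Finset.sum_congr rfl fun p _ => by ring
  have hnonneg : 0 ≤ 2 ^ m * ∑ X : Finset (Fin m), (-1) ^ X.card * purity ψ X := by
    rw [← hnorm]
    exact Finset.sum_nonneg fun p _ => mul_star_self_nonneg _
  exact le_of_mul_le_mul_left (by rwa [mul_zero]) (by positivity : (0 : ℂ) < 2 ^ m)

/-- Every reduction of `ψ` to at most half of the qubits is maximally mixed. -/
def AbsolutelyMaximallyEntangled (ψ : (Fin m → Fin 2) → ℂ) : Prop :=
  ∀ X : Finset (Fin m), 2 * X.card ≤ m → MaximallyMixed ψ X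

namespace AbsolutelyMaximallyEntangled

lemma purity_eq (h : AbsolutelyMaximallyEntangled ψ) (X : Finset (Fin m)) :
    purity ψ X = (2 ^ min X.card (m - X.card))⁻¹ := by
  obtain hX | hX := le_total (2 * X.card) m
  · rw [(h X hX).purity_eq, min_eq_left (by omega)]
  · have hcard : Xᶜ.card = m - X.card := by rw [Finset.card_compl, Fintype.card_fin]
    rw [← purity_compl, (h Xᶜ (by omega)).purity_eq, hcard, min_eq_right (by omega)]

lemma alternating_sum_nonneg (h : AbsolutelyMaximallyEntangled ψ) :
    0 ≤ ∑ j ∈ Finset.range (m + 1), (m.choose j : ℝ) * ((-1) ^ j * (2 ^ min j (m - j))⁻¹) := by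
  have hshadow := sum_neg_one_pow_mul_purity_nonneg ψ
  simp only [h.purity_eq] at hshadow
  rw [← Finset.powerset_univ, Finset.sum_powerset_apply_card
    (fun j => (-1 : ℂ) ^ j * (2 ^ min j (m - j))⁻¹), Finset.card_univ, Fintype.card_fin] at hshadow
  simp only [nsmul_eq_mul] at hshadow
  rw [← Complex.zero_le_real]
  push_cast
  exact hshadow

end AbsolutelyMaximallyEntangled

lemma not_absolutelyMaximallyEntangled_four (ψ : (Fin 4 → Fin 2) → ℂ) :
    ¬ AbsolutelyMaximallyEntangled ψ := fun h => by
  have := h.alternating_sum_nonneg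
  norm_num [Finset.sum_range_succ, Nat.choose] at this

lemma not_absolutelyMaximallyEntangled_eight (ψ : (Fin 8 → Fin 2) → ℂ) :
    ¬ AbsolutelyMaximallyEntangled ψ := fun h => by
  have := h.alternating_sum_nonneg
  norm_num [Finset.sum_range_succ, Nat.choose] at this

end Shadow

/-! ### Homogeneous access structures -/

section AccessStructure

variable {n k : ℕ} {Γ : Finset (Fin n) → Prop} {A B X : Finset (Fin n)}

/-- All minimal authorized sets of `Γ` have exactly `k` players. -/
def Homogeneous (k : ℕ) (Γ : Finset (Fin n) → Prop) : Prop :=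
  ∀ A : Finset (Fin n), IsMinimal Γ A → A.card = k

lemma exists_isMinimal_subset (hA : Γ A) : ∃ B ⊆ A, IsMinimal Γ B := by
  obtain ⟨B, hBA, hB⟩ := exists_minimal_le_of_wellFoundedLT Γ A hA
  exact ⟨B, hBA, minimal_iff_forall_lt.mp hB⟩

lemma NoCloning.authorized_compl (hnc : NoCloning Γ) (hX : ¬ Γ X) : Γ Xᶜ :=
  not_not.mp (mt (hnc X).mpr hX)

lemma NoCloning.exists_isMinimal_disjoint (hnc : NoCloning Γ) (hX : ¬ Γ X) :
    ∃ E, IsMinimal Γ E ∧ Disjoint E X := by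
  obtain ⟨E, hEX, hE⟩ := exists_isMinimal_subset (hnc.authorized_compl hX)
  exact ⟨E, hE, Finset.subset_compl_iff_disjoint_right.mp hEX⟩

lemma NoCloning.not_disjoint (hnc : NoCloning Γ) (hmono : Monotonic Γ) (hA : Γ A) (hB : Γ B) :
    ¬ Disjoint A B := fun hAB =>
  (hnc B).mp hB (hmono A _ hA (Finset.subset_compl_iff_disjoint_right.mpr hAB))

namespace Homogeneous

lemma not_authorized_of_card_lt (hΓ : Homogeneous k Γ) (hX : X.card < k) : ¬ Γ X := fun h => by
  obtain ⟨E, hEX, hE⟩ := exists_isMinimal_subset h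
  exact hX.not_ge ((hΓ E hE).symm.trans_le (Finset.card_le_card hEX))

lemma isMinimal_of_card_eq (hΓ : Homogeneous k Γ) (hA : Γ A) (hcard : A.card = k) :
    IsMinimal Γ A :=
  ⟨hA, fun _ hB => hΓ.not_authorized_of_card_lt ((Finset.card_lt_card hB).trans_eq hcard)⟩

lemma exists_isMinimal_disjoint (hΓ : Homogeneous k Γ) (hnc : NoCloning Γ) (hX : X.card < k) :
    ∃ E, IsMinimal Γ E ∧ Disjoint E X :=
  hnc.exists_isMinimal_disjoint (hΓ.not_authorized_of_card_lt hX)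

lemma two_mul_le (hΓ : Homogeneous k Γ) (hnc : NoCloning Γ) : 2 * k ≤ n + 1 := by
  obtain ⟨E, hE⟩ : ∃ E, IsMinimal Γ E := by
    by_cases h : Γ ∅
    · exact (exists_isMinimal_subset h).imp fun _ => And.right
    · exact (hnc.exists_isMinimal_disjoint h).imp fun _ => And.left
  have hkn : k ≤ n := by simpa [hΓ E hE] using Finset.card_le_univ E
  rcases Nat.eq_zero_or_pos k with rfl | hk
  · omega
  obtain ⟨X, -, hX⟩ := Finset.exists_subset_card_eq (s := (Finset.univ : Finset (Fin n)))
    (n := k - 1) (by simp; omega)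
  obtain ⟨F, hF, hFX⟩ := hΓ.exists_isMinimal_disjoint hnc (X := X) (by omega)
  have hcard := Finset.card_le_univ (F ∪ X)
  rw [Finset.card_union_of_disjoint hFX, hΓ F hF, hX, Fintype.card_fin] at hcard
  omega

lemma isMinimal_iff_card_eq (hΓ : Homogeneous k Γ) (hnc : NoCloning Γ) (hn : n + 1 = 2 * k)
    (A : Finset (Fin n)) : IsMinimal Γ A ↔ A.card = k := by
  refine ⟨hΓ A, fun hA => hΓ.isMinimal_of_card_eq ((hnc A).mpr ?_) hA⟩
  apply hΓ.not_authorized_of_card_lt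
  rw [Finset.card_compl, Fintype.card_fin]
  omega

lemma ne_one (hΓ : Homogeneous k Γ) (hmono : Monotonic Γ) (hnc : NoCloning Γ)
    (hnr : NoRedundancy Γ) (hn : 2 ≤ n) : k ≠ 1 := by
  rintro rfl
  obtain ⟨A, hA, h0⟩ := hnr ⟨0, by omega⟩
  obtain ⟨B, hB, h1⟩ := hnr ⟨1, by omega⟩
  obtain ⟨i, hiA, hiB⟩ := Finset.not_disjoint_iff.mp (hnc.not_disjoint hmono hA.1 hB.1)
  have h0i := Finset.card_le_one.mp (hΓ A hA).le _ h0 i hiA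
  have h1i := Finset.card_le_one.mp (hΓ B hB).le _ h1 i hiB
  simpa using h0i.trans h1i.symm

lemma card_sdiff_lt (hΓ : Homogeneous k Γ) (hmono : Monotonic Γ) (hnc : NoCloning Γ)
    (hA : IsMinimal Γ A) (hB : Γ B) : (A \ B).card < k := by
  have hinter : 0 < (A ∩ B).card := Finset.card_pos.mpr
    (Finset.not_disjoint_iff_nonempty_inter.mp (hnc.not_disjoint hmono hA.1 hB))
  have hcard := Finset.card_sdiff_add_card_inter A B
  rw [hΓ A hA] at hcard
  omega

-- Fix a minimal pair `A`. A minimal pair through an outside player `u` has one further point `v`,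
-- which lies in `A`. Pairs `E`, `F` through distinct outside players share this point `v`, while a
-- minimal pair `B` avoiding `v` meets `E` in `u` and cannot meet `F`.
lemma ne_two (hΓ : Homogeneous k Γ) (hmono : Monotonic Γ) (hnc : NoCloning Γ)
    (hnr : NoRedundancy Γ) (hn : 4 ≤ n) : k ≠ 2 := by
  rintro rfl
  obtain ⟨A, hA, -⟩ := hnr ⟨0, by omega⟩
  have hunique : ∀ E, IsMinimal Γ E → ∀ i ∈ E, ∀ j ∈ E, i ∉ A → j ∉ A → i = j := by
    intro E hE i hi j hj hiA hjA
    have hcard := hΓ.card_sdiff_lt hmono hnc hE hA.1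
    exact Finset.card_le_one.mp (by omega) i (Finset.mem_sdiff.mpr ⟨hi, hiA⟩) j
      (Finset.mem_sdiff.mpr ⟨hj, hjA⟩)
  have hAc : 1 < Aᶜ.card := by
    rw [Finset.card_compl, Fintype.card_fin, hΓ A hA]
    omega
  obtain ⟨u, hu, u', hu', huu'⟩ := Finset.one_lt_card.mp hAc
  obtain ⟨E, hE, huE⟩ := hnr u
  obtain ⟨F, hF, huF⟩ := hnr u'
  obtain ⟨B, hB, hBE⟩ := hΓ.exists_isMinimal_disjoint hnc (X := E.erase u)
    (by rw [Finset.card_erase_of_mem huE, hΓ E hE]; omega)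
  have hmeet : ∀ {C D}, IsMinimal Γ C → IsMinimal Γ D → ∃ i ∈ C, i ∈ D := fun hC hD =>
    Finset.not_disjoint_iff.mp (hnc.not_disjoint hmono hC.1 hD.1)
  obtain ⟨v, hvE, hvF⟩ := hmeet hE hF
  obtain ⟨w, hwB, hwF⟩ := hmeet hB hF
  obtain ⟨b, hbB, hbE⟩ := hmeet hB hE
  have huB : u ∈ B := by
    have hbu : b = u := by_contra fun h =>
      Finset.disjoint_left.mp hBE hbB (Finset.mem_erase.mpr ⟨h, hbE⟩)
    exact hbu ▸ hbB
  have huA := Finset.mem_compl.mp hu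
  have huA' := Finset.mem_compl.mp hu'
  have hvA : v ∈ A := by_contra fun h =>
    huu' ((hunique E hE u huE v hvE huA h).trans (hunique F hF v hvF u' huF h huA'))
  have hwA : w ∈ A := by_contra fun h =>
    huu' ((hunique B hB u huB w hwB huA h).trans (hunique F hF w hwF u' huF h huA'))
  have hvw : v = w := Finset.card_le_one.mp
    (by rw [Finset.card_erase_of_mem huF, hΓ F hF]) v
    (Finset.mem_erase.mpr ⟨ne_of_mem_of_not_mem hvA huA', hvF⟩) w
    (Finset.mem_erase.mpr ⟨ne_of_mem_of_not_mem hwA huA', hwF⟩)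
  exact Finset.disjoint_left.mp hBE hwB
    (Finset.mem_erase.mpr ⟨ne_of_mem_of_not_mem hwA huA, hvw ▸ hvE⟩)

end Homogeneous

end AccessStructure

/-! ### Entropies of a pure QSS state -/

section Positions

variable {n : ℕ} {A B : Finset (Fin n)}

lemma zero_notMem_posOf (A : Finset (Fin n)) : 0 ∉ posOf A := by simp [posOf]

lemma posOf_compl (A : Finset (Fin n)) : (posOf A)ᶜ = insert 0 (posOf Aᶜ) := by
  ext i
  refine Fin.cases ?_ (fun j => ?_) i <;> simp [posOf]

lemma posOf_union (A B : Finset (Fin n)) : posOf (A ∪ B) = posOf A ∪ posOf B :=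
  Finset.image_union A B

lemma disjoint_posOf (h : Disjoint A B) : Disjoint (posOf A) (posOf B) :=
  (Finset.disjoint_image (Fin.succ_injective n)).mpr h

lemma card_posOf (A : Finset (Fin n)) : (posOf A).card = A.card :=
  Finset.card_image_of_injective A (Fin.succ_injective n)

lemma exists_posOf_eq {Z : Finset (Fin (n + 1))} (hZ : 0 ∉ Z) : ∃ A, posOf A = Z := by
  refine ⟨Finset.univ.filter fun i => i.succ ∈ Z, ?_⟩
  ext i
  refine Fin.cases ?_ (fun j => ?_) i <;> simp [posOf, hZ]

lemma Sent_insert_zero_posOf (ψ : (Fin (n + 1) → Fin 2) → ℂ) (A : Finset (Fin n)) :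
    Sent ψ (insert 0 (posOf A)) = Sent ψ (posOf Aᶜ) := by
  rw [← Sent_compl ψ (posOf Aᶜ), posOf_compl, compl_compl]

end Positions

section ShareEntropy

variable {n : ℕ} {ψ : (Fin (n + 1) → Fin 2) → ℂ} {X Y Y' : Finset (Fin n)}

/-- The entropy, in bits, of the shares held by the players in `A`. -/
noncomputable def shareEntropy (ψ : (Fin (n + 1) → Fin 2) → ℂ) (A : Finset (Fin n)) : ℝ :=
  Sent ψ (posOf A) / Real.log 2

lemma log_two_pos : 0 < Real.log 2 := Real.log_pos one_lt_two

lemma shareEntropy_empty (hψ : ∑ x, ‖ψ x‖ ^ 2 = 1) : shareEntropy ψ ∅ = 0 := by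
  rw [shareEntropy, posOf, Finset.image_empty, Sent_empty hψ, zero_div]

lemma shareEntropy_singleton_le_one (hψ : ∑ x, ‖ψ x‖ ^ 2 = 1) (i : Fin n) :
    shareEntropy ψ {i} ≤ 1 := by
  have h := Sent_le_card_mul_log_two hψ (posOf {i})
  rw [card_posOf, Finset.card_singleton, Nat.cast_one, one_mul] at h
  exact (div_le_one log_two_pos).mpr h

lemma shareEntropy_union_le (hψ : ∑ x, ‖ψ x‖ ^ 2 = 1) (hXY : Disjoint X Y) :
    shareEntropy ψ (X ∪ Y) ≤ shareEntropy ψ X + shareEntropy ψ Y := by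
  rw [shareEntropy, shareEntropy, shareEntropy, ← add_div, posOf_union,
    div_le_div_iff_of_pos_right log_two_pos]
  exact Sent_union_le hψ (disjoint_posOf hXY)

lemma shareEntropy_union_eq_add_mono_right (hψ : ∑ x, ‖ψ x‖ ^ 2 = 1) (hXY : Disjoint X Y)
    (hY' : Y' ⊆ Y) (h : shareEntropy ψ (X ∪ Y) = shareEntropy ψ X + shareEntropy ψ Y) :
    shareEntropy ψ (X ∪ Y') = shareEntropy ψ X + shareEntropy ψ Y' := by
  simp only [shareEntropy, ← add_div, posOf_union, div_left_inj' log_two_pos.ne'] at h ⊢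
  exact Sent_union_eq_add_mono_right hψ (disjoint_posOf hXY) (Finset.image_subset_image hY') h

-- The entropy of `Yᶜ` is that of `Y` joined with the reference qubit.
lemma shareEntropy_compl_union_eq_add_mono_right (hψ : ∑ x, ‖ψ x‖ ^ 2 = 1) (hXY : Disjoint X Y)
    (hY' : Y' ⊆ Y) (h : shareEntropy ψ (X ∪ Y)ᶜ = shareEntropy ψ X + shareEntropy ψ Yᶜ) :
    shareEntropy ψ (X ∪ Y')ᶜ = shareEntropy ψ X + shareEntropy ψ Y'ᶜ := by
  simp only [shareEntropy, ← add_div, ← Sent_insert_zero_posOf, posOf_union,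
    ← Finset.union_insert, div_left_inj' log_two_pos.ne'] at h ⊢
  refine Sent_union_eq_add_mono_right hψ ?_
    (Finset.insert_subset_insert 0 (Finset.image_subset_image hY')) h
  exact Finset.disjoint_insert_right.mpr ⟨zero_notMem_posOf X, disjoint_posOf hXY⟩

end ShareEntropy

namespace IsPureQSSState

variable {n k : ℕ} {Γ : Finset (Fin n) → Prop} {ψ : (Fin (n + 1) → Fin 2) → ℂ}
  {A B X : Finset (Fin n)}

lemma not_authorized_empty (hψ : IsPureQSSState Γ ψ) : ¬ Γ ∅ := fun h => by
  have hrec := hψ.recover ∅ h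
  rw [posOf, Finset.image_empty, Sent_empty hψ.normalized, insert_empty_eq] at hrec
  linarith [log_two_pos]

lemma Sent_reference (hψ : IsPureQSSState Γ ψ) (hnc : NoCloning Γ) :
    Sent ψ {0} = Real.log 2 := by
  have hrec := hψ.recover _ (hnc.authorized_compl hψ.not_authorized_empty)
  have hall : Sent ψ {0} = Sent ψ (posOf ∅ᶜ) := by
    rw [← Sent_insert_zero_posOf, posOf, Finset.image_empty, insert_empty_eq]
  rw [Sent_insert_zero_posOf, ← hall, compl_compl, posOf, Finset.image_empty,
    Sent_empty hψ.normalized] at hrec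
  linarith

lemma shareEntropy_eq_compl_add_one (hψ : IsPureQSSState Γ ψ) (hnc : NoCloning Γ) (hA : Γ A) :
    shareEntropy ψ A = shareEntropy ψ Aᶜ + 1 := by
  have hrec := hψ.recover A hA
  rw [Sent_insert_zero_posOf, hψ.Sent_reference hnc] at hrec
  rw [shareEntropy, shareEntropy, ← sub_eq_iff_eq_add', ← sub_div,
    div_eq_one_iff_eq log_two_pos.ne']
  linarith

-- Adding `c` to `Aᶜ` makes that set authorized while removing `c` from `A` makes it unauthorized,
-- so the entropy gap between the two sides moves by two bits; subadditivity allows no more.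
lemma shareEntropy_singleton_and_erase (hψ : IsPureQSSState Γ ψ) (hnc : NoCloning Γ)
    (hA : IsMinimal Γ A) {c : Fin n} (hc : c ∈ A) :
    shareEntropy ψ {c} = 1 ∧
      shareEntropy ψ A = shareEntropy ψ {c} + shareEntropy ψ (A.erase c) := by
  have hauth := hψ.shareEntropy_eq_compl_add_one hnc hA.1
  have herase := hψ.shareEntropy_eq_compl_add_one hnc
    (hnc.authorized_compl (hA.2 _ (Finset.erase_ssubset hc)))
  have hcompl := shareEntropy_union_le hψ.normalized
    (Finset.disjoint_singleton_left.mpr (Finset.notMem_compl.mpr hc))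
  have hsplit := shareEntropy_union_le hψ.normalized
    (Finset.disjoint_singleton_left.mpr (Finset.notMem_erase c A))
  rw [← Finset.insert_eq, ← Finset.compl_erase] at hcompl
  rw [← Finset.insert_eq, Finset.insert_erase hc] at hsplit
  rw [compl_compl] at herase
  have hone := shareEntropy_singleton_le_one hψ.normalized c
  constructor <;> linarith

lemma shareEntropy_eq_card (hψ : IsPureQSSState Γ ψ) (hnc : NoCloning Γ) (hA : IsMinimal Γ A)
    (hX : X ⊆ A) : shareEntropy ψ X = X.card := by
  induction X using Finset.induction_on with
  | empty => simp [shareEntropy_empty hψ.normalized]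
  | insert c X hc ih =>
    obtain ⟨hcA, hXA⟩ := Finset.insert_subset_iff.mp hX
    obtain ⟨hone, hadd⟩ := hψ.shareEntropy_singleton_and_erase hnc hA hcA
    have hsplit : A = {c} ∪ A.erase c := by rw [← Finset.insert_eq, Finset.insert_erase hcA]
    rw [Finset.card_insert_of_notMem hc, Finset.insert_eq,
      shareEntropy_union_eq_add_mono_right hψ.normalized
        (Finset.disjoint_singleton_left.mpr (Finset.notMem_erase c A))
        (Finset.subset_erase.mpr ⟨hXA, hc⟩) (by rwa [← hsplit]), hone, ih hXA]
    push_cast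
    ring

lemma shareEntropy_compl_isMinimal (hψ : IsPureQSSState Γ ψ) (hnc : NoCloning Γ)
    (hA : IsMinimal Γ A) : shareEntropy ψ Aᶜ = A.card - 1 := by
  have hauth := hψ.shareEntropy_eq_compl_add_one hnc hA.1
  rw [hψ.shareEntropy_eq_card hnc hA subset_rfl] at hauth
  linarith

lemma shareEntropy_compl_of_ssubset (hψ : IsPureQSSState Γ ψ) (hnc : NoCloning Γ)
    (hA : IsMinimal Γ A) (hX : X ⊂ A) : shareEntropy ψ Xᶜ = X.card + 1 := by
  rw [hψ.shareEntropy_eq_compl_add_one hnc (hnc.authorized_compl (hA.2 X hX)), compl_compl,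
    hψ.shareEntropy_eq_card hnc hA hX.subset]

lemma shareEntropy_compl_union (hψ : IsPureQSSState Γ ψ) (hnc : NoCloning Γ)
    (hA : IsMinimal Γ A) (hB : IsMinimal Γ B) (hAB : A.card = B.card)
    (hcard : (A ∩ B).card + 1 = A.card) : shareEntropy ψ (A ∪ B)ᶜ = A.card - 2 := by
  obtain ⟨d, hd⟩ : ∃ d, B \ A = {d} := Finset.card_eq_one.mp <| by
    have := Finset.card_sdiff_add_card_inter B A
    rw [Finset.inter_comm] at this
    omega
  have hdB : d ∈ B ∧ d ∉ A := Finset.mem_sdiff.mp (hd ▸ Finset.mem_singleton_self d)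
  have hinter : (A ∩ B)ᶜ = {d} ∪ Bᶜ := by
    rw [← hd]
    ext i
    simp only [mem_compl, mem_union, mem_sdiff, mem_inter]
    tauto
  have hAc : Aᶜ = {d} ∪ (A ∪ B)ᶜ := by
    rw [← hd]
    ext i
    simp only [mem_compl, mem_union, mem_sdiff]
    tauto
  have hone := (hψ.shareEntropy_singleton_and_erase hnc hB hdB.1).1
  have hBc := hψ.shareEntropy_compl_isMinimal hnc hB
  have hIc := hψ.shareEntropy_compl_of_ssubset hnc hB (X := A ∩ B)
    (Finset.ssubset_iff_subset_ne.mpr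
      ⟨Finset.inter_subset_right, fun h => by rw [h] at hcard; omega⟩)
  have hcard' : ((A ∩ B).card : ℝ) + 1 = A.card := by exact_mod_cast hcard
  have hadd := shareEntropy_union_eq_add_mono_right hψ.normalized (X := {d}) (Y := Bᶜ)
    (Y' := (A ∪ B)ᶜ) (by simp [hdB.1]) (by simp)
    (by rw [← hinter, hIc, hone, hBc, ← hAB]; linarith)
  rw [← hAc, hψ.shareEntropy_compl_isMinimal hnc hA, hone] at hadd
  linarith

lemma Sent_eq_of_card_eq (hψ : IsPureQSSState Γ ψ) (hnc : NoCloning Γ)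
    (hmin : ∀ A : Finset (Fin n), A.card = k → IsMinimal Γ A) (hn : n + 1 = 2 * k)
    {Z : Finset (Fin (n + 1))} (hZ : Z.card = k) : Sent ψ Z = Z.card * Real.log 2 := by
  have hplayers : ∀ A : Finset (Fin n), A.card = k → Sent ψ (posOf A) = k * Real.log 2 :=
    fun A hA => (div_eq_iff log_two_pos.ne').mp
      ((hψ.shareEntropy_eq_card hnc (hmin A hA) subset_rfl).trans (congrArg _ hA))
  rw [hZ]
  by_cases h0 : 0 ∈ Z
  · obtain ⟨A, hA⟩ := exists_posOf_eq (Finset.notMem_compl.mpr h0)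
    rw [← Sent_compl, ← hA]
    apply hplayers
    rw [← card_posOf, hA, Finset.card_compl, Fintype.card_fin]
    omega
  · obtain ⟨A, rfl⟩ := exists_posOf_eq h0
    exact hplayers A (by rw [← hZ, card_posOf])

lemma absolutelyMaximallyEntangled (hψ : IsPureQSSState Γ ψ) (hnc : NoCloning Γ)
    (hΓ : Homogeneous k Γ) (hn : n + 1 = 2 * k) : AbsolutelyMaximallyEntangled ψ := fun X hX => by
  obtain ⟨Z, hXZ, hZ⟩ := Finset.exists_superset_card_eq (n := k) (by omega : X.card ≤ k)
    (by simp; omega)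
  exact maximallyMixed_of_Sent_eq hψ.normalized <|
    Sent_eq_card_mul_log_two_mono hψ.normalized hXZ <|
      hψ.Sent_eq_of_card_eq hnc (fun A => (hΓ.isMinimal_iff_card_eq hnc hn A).mpr) hn hZ

end IsPureQSSState

/-! ### Minimal sets overlapping in all but one player -/

/-- No minimal set meets `C` in a single player `r` if some minimal set contains `C \ {r}`. -/
def NoSoleContact {n : ℕ} (Γ : Finset (Fin n) → Prop) (C : Finset (Fin n)) : Prop :=
  ∀ r ∈ C, ∀ E' E, IsMinimal Γ E' → C.erase r ⊆ E' → IsMinimal Γ E → r ∈ E →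
    ¬ Disjoint E (C.erase r)

namespace IsPureQSSState

variable {n : ℕ} {Γ : Finset (Fin n) → Prop} {ψ : (Fin (n + 1) → Fin 2) → ℂ}
  {A B E : Finset (Fin n)}

lemma not_compl_union_subset (hψ : IsPureQSSState Γ ψ) (hnc : NoCloning Γ)
    (hA : IsMinimal Γ A) (hB : IsMinimal Γ B) (hAB : A.card = B.card)
    (hinter : (A ∩ B).card + 1 = A.card) (hcompl : (A ∪ B)ᶜ.card + 1 = A.card)
    (hE : IsMinimal Γ E) : ¬ (A ∪ B)ᶜ ⊆ E := fun hsub => by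
  have hentropy := hψ.shareEntropy_compl_union hnc hA hB hAB hinter
  rw [hψ.shareEntropy_eq_card hnc hE hsub, ← hcompl] at hentropy
  push_cast at hentropy
  linarith

-- If `E` met `(A ∪ B)ᶜ` only in `r`, player `r` would be uncorrelated with `A ∪ B` and the
-- reference together, hence with `E \ {r}` and the reference, contradicting that `E` needs `r`.
lemma noSoleContact_compl_union (hψ : IsPureQSSState Γ ψ) (hnc : NoCloning Γ)
    (hA : IsMinimal Γ A) (hB : IsMinimal Γ B) (hAB : A.card = B.card)
    (hinter : (A ∩ B).card + 1 = A.card) (hcompl : (A ∪ B)ᶜ.card = A.card) :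
    NoSoleContact Γ (A ∪ B)ᶜ := fun r hr E' E hE' hsub hE hrE hdisj => by
  have hone := (hψ.shareEntropy_singleton_and_erase hnc hE hrE).1
  have hrest : E.erase r ⊆ A ∪ B := fun i hi => by
    obtain ⟨hir, hiE⟩ := Finset.mem_erase.mp hi
    exact by_contra fun h => Finset.disjoint_left.mp hdisj hiE
      (Finset.mem_erase.mpr ⟨hir, Finset.mem_compl.mpr h⟩)
  have hadd : shareEntropy ψ ({r} ∪ (A ∪ B))ᶜ =
      shareEntropy ψ {r} + shareEntropy ψ (A ∪ B)ᶜ := by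
    rw [← Finset.insert_eq, Finset.compl_insert, hψ.shareEntropy_eq_card hnc hE' hsub, hone,
      hψ.shareEntropy_compl_union hnc hA hB hAB hinter, Finset.cast_card_erase_of_mem hr, hcompl]
    ring
  have hmono := shareEntropy_compl_union_eq_add_mono_right hψ.normalized
    (Finset.disjoint_singleton_left.mpr (Finset.mem_compl.mp hr)) hrest hadd
  rw [← Finset.insert_eq, Finset.insert_erase hrE, hψ.shareEntropy_compl_isMinimal hnc hE,
    hψ.shareEntropy_compl_of_ssubset hnc hE (Finset.erase_ssubset hrE), hone,
    Finset.cast_card_erase_of_mem hrE] at hmono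
  linarith

end IsPureQSSState

section RankThree

variable {n : ℕ} {Γ : Finset (Fin n) → Prop} {A B C E : Finset (Fin n)}

/-- Whenever two minimal sets share two players, every minimal set has at most one player outside
their union. -/
def OverlapAbsorbing (Γ : Finset (Fin n) → Prop) : Prop :=
  ∀ A B E : Finset (Fin n), IsMinimal Γ A → IsMinimal Γ B → (A ∩ B).card = 2 → IsMinimal Γ E →
    (E \ (A ∪ B)).card ≤ 1

lemma Homogeneous.card_union_eq_four (hΓ : Homogeneous 3 Γ) (hA : IsMinimal Γ A)
    (hB : IsMinimal Γ B) (hAB : (A ∩ B).card = 2) : (A ∪ B).card = 4 := by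
  have h := Finset.card_union_add_card_inter A B
  rw [hΓ A hA, hΓ B hB] at h
  omega

lemma overlapAbsorbing_six {Γ : Finset (Fin 6) → Prop} {ψ : (Fin 7 → Fin 2) → ℂ}
    (hψ : IsPureQSSState Γ ψ) (hnc : NoCloning Γ) (hΓ : Homogeneous 3 Γ) :
    OverlapAbsorbing Γ := by
  intro A B E hA hB hAB hE
  by_contra! hcard
  have hK : (A ∪ B)ᶜ.card = 2 := by
    rw [Finset.card_compl, hΓ.card_union_eq_four hA hB hAB, Fintype.card_fin]
  refine hψ.not_compl_union_subset hnc hA hB ((hΓ A hA).trans (hΓ B hB).symm)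
    (by rw [hAB, hΓ A hA]) (by rw [hK, hΓ A hA]) hE ?_
  rw [← Finset.eq_of_subset_of_card_le (fun i hi => Finset.mem_compl.mpr (Finset.mem_sdiff.mp hi).2)
    (hK.trans_le hcard)]
  exact Finset.sdiff_subset

lemma exists_isMinimal_sdiff_eq_singleton (hΓ : Homogeneous 3 Γ) (hmono : Monotonic Γ)
    (hnc : NoCloning Γ) (hA : IsMinimal Γ A) (hB : IsMinimal Γ B) (hAB : (A ∩ B).card = 2) :
    ∃ Z, IsMinimal Γ Z ∧ ∃ z, Z \ (A ∪ B) = {z} := by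
  obtain ⟨Z, hZ, hdisj⟩ := hΓ.exists_isMinimal_disjoint hnc (X := A ∩ B) (by omega)
  refine ⟨Z, hZ, Finset.card_eq_one.mp ?_⟩
  have hsingle : ∀ {C D : Finset (Fin n)}, IsMinimal Γ C → (C ∩ D).card = 2 →
      Disjoint Z (C ∩ D) → (Z ∩ C).card = 1 := by
    intro C D hC hCD hZCD
    have hpos : 0 < (Z ∩ C).card := Finset.card_pos.mpr
      (Finset.not_disjoint_iff_nonempty_inter.mp (hnc.not_disjoint hmono hZ.1 hC.1))
    have hle : (Z ∩ C).card ≤ (C \ D).card := Finset.card_le_card fun i hi => by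
      obtain ⟨hiZ, hiC⟩ := Finset.mem_inter.mp hi
      exact Finset.mem_sdiff.mpr ⟨hiC, fun hiD =>
        Finset.disjoint_left.mp hZCD hiZ (Finset.mem_inter.mpr ⟨hiC, hiD⟩)⟩
    have hcard := Finset.card_sdiff_add_card_inter C D
    rw [hΓ C hC] at hcard
    omega
  have hunion : (Z ∩ (A ∪ B)).card = 2 := by
    rw [Finset.inter_union_distrib_left, Finset.card_union_of_disjoint, hsingle hA hAB hdisj,
      hsingle hB (Finset.inter_comm A B ▸ hAB) (Finset.inter_comm A B ▸ hdisj)]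
    rw [Finset.disjoint_iff_inter_eq_empty, ← Finset.inter_inter_distrib_left]
    exact Finset.disjoint_iff_inter_eq_empty.mp hdisj
  have hcard := Finset.card_sdiff_add_card_inter Z (A ∪ B)
  rw [hΓ Z hZ] at hcard
  omega

-- No minimal set through `s` and `t` exists because `Z` meets the triple in `z` alone; the contact
-- property at `s` then forces `z` into the minimal sets through `s`, and at `t` likewise.
lemma NoSoleContact.mem_of_mem_triple {z s t : Fin n} {Z E₀ : Finset (Fin n)}
    (hcontact : NoSoleContact Γ {z, s, t}) (hnr : NoRedundancy Γ) (hzs : z ≠ s) (hzt : z ≠ t)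
    (hst : s ≠ t) (hZ : IsMinimal Γ Z) (hzZ : z ∈ Z) (hsZ : s ∉ Z) (htZ : t ∉ Z)
    (hE₀ : IsMinimal Γ E₀) (hzE₀ : z ∈ E₀) (htE₀ : t ∈ E₀) (hE : IsMinimal Γ E) {i : Fin n}
    (hiE : i ∈ E) (hi : i ∈ ({z, s, t} : Finset (Fin n))) : z ∈ E := by
  have erase_z : ({z, s, t} : Finset (Fin n)).erase z = {s, t} := by grind
  have erase_s : ({z, s, t} : Finset (Fin n)).erase s = {z, t} := by grind
  have erase_t : ({z, s, t} : Finset (Fin n)).erase t = {z, s} := by grind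
  have not_both : ∀ F, IsMinimal Γ F → s ∈ F → t ∉ F := fun F hF hsF htF =>
    hcontact z (by simp) F Z hF (by simp [erase_z, Finset.insert_subset_iff, hsF, htF]) hZ hzZ
      (by simp [erase_z, hsZ, htZ])
  have through_s : ∀ F, IsMinimal Γ F → s ∈ F → z ∈ F := fun F hF hsF => by
    by_contra hzF
    exact hcontact s (by simp) E₀ F hE₀ (by simp [erase_s, Finset.insert_subset_iff, hzE₀, htE₀])
      hF hsF (by simp [erase_s, hzF, not_both F hF hsF])
  have through_t : ∀ F, IsMinimal Γ F → t ∈ F → z ∈ F := fun F hF htF => by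
    by_contra hzF
    have hsF : s ∉ F := fun h => not_both F hF h htF
    obtain ⟨E', hE', hsE'⟩ := hnr s
    exact hcontact t (by simp) E' F hE'
      (by simp [erase_t, Finset.insert_subset_iff, through_s E' hE' hsE', hsE']) hF htF
      (by simp [erase_t, hzF, hsF])
  simp only [Finset.mem_insert, Finset.mem_singleton] at hi
  rcases hi with rfl | rfl | rfl
  exacts [hiE, through_s E hE hiE, through_t E hE hiE]

lemma NoSoleContact.mem_of_mem {z i : Fin n} {Z E₀ : Finset (Fin n)}
    (hcontact : NoSoleContact Γ C) (hnr : NoRedundancy Γ) (hC : C.card = 3)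
    (hZ : IsMinimal Γ Z) (hZC : Z ∩ C = {z}) (hE₀ : IsMinimal Γ E₀) (hcard : 2 ≤ (E₀ ∩ C).card)
    (hE : IsMinimal Γ E) (hiE : i ∈ E) (hiC : i ∈ C) : z ∈ E := by
  obtain ⟨hzZ, hzC⟩ := Finset.mem_inter.mp (hZC ▸ Finset.mem_singleton_self z)
  have hZonly : ∀ j ∈ C, j ≠ z → j ∉ Z := fun j hjC hjz hjZ =>
    hjz (Finset.mem_singleton.mp (hZC ▸ Finset.mem_inter.mpr ⟨hjZ, hjC⟩))
  have hnot : ¬ C.erase z ⊆ E₀ := fun hsub =>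
    hcontact z hzC E₀ Z hE₀ hsub hZ hzZ <| Finset.disjoint_right.mpr fun j hj =>
      hZonly j (Finset.mem_of_mem_erase hj) (Finset.ne_of_mem_erase hj)
  obtain ⟨s, hs, hsE₀⟩ := Finset.not_subset.mp hnot
  obtain ⟨hsz, hsC⟩ := Finset.mem_erase.mp hs
  obtain ⟨t, ht⟩ : ∃ t, (C.erase z).erase s = {t} := Finset.card_eq_one.mp
    (by rw [Finset.card_erase_of_mem hs, Finset.card_erase_of_mem hzC, hC])
  have htmem : t ∈ (C.erase z).erase s := ht ▸ Finset.mem_singleton_self t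
  obtain ⟨hts, htz, htC⟩ : t ≠ s ∧ t ≠ z ∧ t ∈ C := by simpa only [Finset.mem_erase] using htmem
  obtain rfl : C = {z, s, t} := by
    rw [← Finset.insert_erase hzC, ← Finset.insert_erase hs, ht]
  have hsub : {z, s, t} \ {s} ⊆ E₀ := by
    have hle : E₀ ∩ {z, s, t} ⊆ {z, s, t} \ {s} := fun j hj => Finset.mem_sdiff.mpr
      ⟨(Finset.mem_inter.mp hj).2, fun h =>
        hsE₀ (Finset.mem_singleton.mp h ▸ (Finset.mem_inter.mp hj).1)⟩
    rw [← Finset.eq_of_subset_of_card_le hle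
      (by rw [Finset.sdiff_singleton_eq_erase, Finset.card_erase_of_mem hsC, hC]; exact hcard)]
    exact Finset.inter_subset_left
  exact hcontact.mem_of_mem_triple hnr hsz.symm htz.symm hts.symm hZ hzZ (hZonly s hsC hsz)
    (hZonly t htC htz) hE₀ (hsub (by simp [hsz.symm])) (hsub (by simp [hts])) hE hiE hiC

lemma overlapAbsorbing_seven {Γ : Finset (Fin 7) → Prop} {ψ : (Fin 8 → Fin 2) → ℂ}
    (hψ : IsPureQSSState Γ ψ) (hmono : Monotonic Γ) (hnc : NoCloning Γ) (hnr : NoRedundancy Γ)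
    (hΓ : Homogeneous 3 Γ) : OverlapAbsorbing Γ := by
  intro A B E₀ hA hB hAB hE₀
  by_contra! hcard
  have hC : (A ∪ B)ᶜ.card = 3 := by
    rw [Finset.card_compl, hΓ.card_union_eq_four hA hB hAB, Fintype.card_fin]
  obtain ⟨Z, hZ, z, hz⟩ := exists_isMinimal_sdiff_eq_singleton hΓ hmono hnc hA hB hAB
  rw [Finset.sdiff_eq_inter_compl] at hz hcard
  have hmem : ∀ E, IsMinimal Γ E → ∀ i ∈ E, i ∈ (A ∪ B)ᶜ → z ∈ E := fun E hE i =>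
    (hψ.noSoleContact_compl_union hnc hA hB ((hΓ A hA).trans (hΓ B hB).symm)
      (by rw [hAB, hΓ A hA]) (by rw [hC, hΓ A hA])).mem_of_mem hnr hC hZ hz hE₀ hcard hE
  have hsmall : (insert z (E₀ \ (A ∪ B)ᶜ)).card < 3 := by
    have hsplit := Finset.card_sdiff_add_card_inter E₀ (A ∪ B)ᶜ
    rw [hΓ E₀ hE₀] at hsplit
    exact (Finset.card_insert_le _ _).trans_lt (by omega)
  obtain ⟨E₁, hE₁, hdisj⟩ := hΓ.exists_isMinimal_disjoint hnc hsmall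
  rw [Finset.disjoint_insert_right] at hdisj
  obtain ⟨i, hi₁, hi₀⟩ := Finset.not_disjoint_iff.mp (hnc.not_disjoint hmono hE₁.1 hE₀.1)
  exact hdisj.1 <| hmem E₁ hE₁ i hi₁ <| by_contra fun hiC =>
    Finset.disjoint_left.mp hdisj.2 hi₁ (Finset.mem_sdiff.mpr ⟨hi₀, hiC⟩)

lemma OverlapAbsorbing.isMinimal_of_erase_union (hover : OverlapAbsorbing Γ)
    (hΓ : Homogeneous 3 Γ) (hnc : NoCloning Γ) (hA : IsMinimal Γ A) (hB : IsMinimal Γ B)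
    (hAB : (A ∩ B).card = 2) {x : Fin n} (hx : x ∈ A ∪ B) : IsMinimal Γ ((A ∪ B).erase x) := by
  have hcard : ((A ∪ B).erase x).card = 3 := by
    rw [Finset.card_erase_of_mem hx, hΓ.card_union_eq_four hA hB hAB]
  refine hΓ.isMinimal_of_card_eq (by_contra fun hX => ?_) hcard
  obtain ⟨F, hF, hFX⟩ := hnc.exists_isMinimal_disjoint hX
  have hinside : F ∩ (A ∪ B) ⊆ {x} := fun i hi => by
    obtain ⟨hiF, hiK⟩ := Finset.mem_inter.mp hi
    exact Finset.mem_singleton.mpr <| by_contra fun h =>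
      Finset.disjoint_left.mp hFX hiF (Finset.mem_erase.mpr ⟨h, hiK⟩)
  have hle := Finset.card_le_card hinside
  have houtside := hover A B F hA hB hAB hF
  have hsplit := Finset.card_sdiff_add_card_inter F (A ∪ B)
  rw [hΓ F hF] at hsplit
  rw [Finset.card_singleton] at hle
  omega

-- A triple in `A ∪ B` containing `E ∩ (A ∪ B)` but missing some `y ∈ F \ E` would together with `E`
-- leave both `y` and `q` uncovered.
lemma OverlapAbsorbing.inter_union_subset (hover : OverlapAbsorbing Γ) (hΓ : Homogeneous 3 Γ)
    (hnc : NoCloning Γ) (hA : IsMinimal Γ A) (hB : IsMinimal Γ B) (hAB : (A ∩ B).card = 2)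
    (hE : IsMinimal Γ E) (hEcard : (E ∩ (A ∪ B)).card = 2) {F : Finset (Fin n)}
    (hF : IsMinimal Γ F) {q : Fin n} (hqF : q ∈ F) (hqE : q ∉ E) (hq : q ∉ A ∪ B) :
    F ∩ (A ∪ B) ⊆ E := fun y hy => by
  obtain ⟨hyF, hyK⟩ := Finset.mem_inter.mp hy
  by_contra hyE
  have hX : IsMinimal Γ ((A ∪ B).erase y) :=
    hover.isMinimal_of_erase_union hΓ hnc hA hB hAB hyK
  have hXE : (A ∪ B).erase y ∩ E = E ∩ (A ∪ B) := by
    rw [Finset.erase_inter, Finset.inter_comm, Finset.erase_eq_of_notMem]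
    exact fun h => hyE (Finset.mem_inter.mp h).1
  have hle := hover _ E F hX hE (by rw [hXE, hEcard]) hF
  refine hq (Finset.card_le_one.mp hle y ?_ q ?_ ▸ hyK) <;> simp [hyF, hyE, hqF, hqE, hq]

lemma OverlapAbsorbing.sdiff_eq_singleton (hover : OverlapAbsorbing Γ)
    (hA : IsMinimal Γ A) (hB : IsMinimal Γ B) (hAB : (A ∩ B).card = 2) (hE : IsMinimal Γ E)
    {p : Fin n} (hpE : p ∈ E) (hp : p ∉ A ∪ B) : E \ (A ∪ B) = {p} := by
  have hpmem := Finset.mem_sdiff.mpr ⟨hpE, hp⟩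
  exact Finset.eq_singleton_iff_unique_mem.mpr
    ⟨hpmem, fun j hj => Finset.card_le_one.mp (hover A B E hA hB hAB hE) j hj p hpmem⟩

lemma Homogeneous.card_inter_of_sdiff_eq_singleton {k : ℕ} (hΓ : Homogeneous (k + 1) Γ)
    (hE : IsMinimal Γ E) {p : Fin n} (hp : E \ C = {p}) : (E ∩ C).card = k := by
  have hsplit := Finset.card_sdiff_add_card_inter E C
  rw [hp, Finset.card_singleton, hΓ E hE] at hsplit
  omega

-- Minimal sets `E`, `F` reaching outside `K = A ∪ B` at distinct players have the same two players
-- inside `K`. A triple in `K` missing one of these has two players outside `E ∪ F`.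
lemma OverlapAbsorbing.card_inter_ne_two (hover : OverlapAbsorbing Γ) (hΓ : Homogeneous 3 Γ)
    (hnc : NoCloning Γ) (hnr : NoRedundancy Γ) (hn : 6 ≤ n) (hA : IsMinimal Γ A)
    (hB : IsMinimal Γ B) : (A ∩ B).card ≠ 2 := fun hAB => by
  have hK := hΓ.card_union_eq_four hA hB hAB
  obtain ⟨p, hp, q, hq, hpq⟩ : ∃ p ∈ (A ∪ B)ᶜ, ∃ q ∈ (A ∪ B)ᶜ, p ≠ q := Finset.one_lt_card.mp
    (by rw [Finset.card_compl, hK, Fintype.card_fin]; omega)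
  rw [Finset.mem_compl] at hp hq
  obtain ⟨E, hE, hpE⟩ := hnr p
  obtain ⟨F, hF, hqF⟩ := hnr q
  have hEp := hover.sdiff_eq_singleton hA hB hAB hE hpE hp
  have hFq := hover.sdiff_eq_singleton hA hB hAB hF hqF hq
  have honly : ∀ j ∈ E, j ∉ A ∪ B → j = p := fun j hjE hj =>
    Finset.mem_singleton.mp (hEp ▸ Finset.mem_sdiff.mpr ⟨hjE, hj⟩)
  have hqE : q ∉ E := fun h => hpq (honly q h hq).symm
  have hpF : p ∉ F := fun h =>
    hpq (Finset.mem_singleton.mp (hFq ▸ Finset.mem_sdiff.mpr ⟨h, hp⟩))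
  have hEcard := hΓ.card_inter_of_sdiff_eq_singleton hE hEp
  have hFcard := hΓ.card_inter_of_sdiff_eq_singleton hF hFq
  have hFE : F ∩ (A ∪ B) ⊆ E :=
    hover.inter_union_subset hΓ hnc hA hB hAB hE hEcard hF hqF hqE hq
  have hEF : E ∩ F = F ∩ (A ∪ B) := by
    refine Finset.Subset.antisymm (fun j hj => ?_)
      (Finset.subset_inter hFE Finset.inter_subset_left)
    obtain ⟨hjE, hjF⟩ := Finset.mem_inter.mp hj
    exact Finset.mem_inter.mpr ⟨hjF, by_contra fun h => hpF (honly j hjE h ▸ hjF)⟩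
  obtain ⟨x, hx⟩ : (F ∩ (A ∪ B)).Nonempty := Finset.card_pos.mp (by rw [hFcard]; simp)
  have hxK := (Finset.mem_inter.mp hx).2
  have hle := hover E F _ hE hF (by rw [hEF, hFcard])
    (hover.isMinimal_of_erase_union hΓ hnc hA hB hAB hxK)
  have hsub : (A ∪ B) \ E ⊆ (A ∪ B).erase x \ (E ∪ F) := fun j hj => by
    obtain ⟨hjK, hjE⟩ := Finset.mem_sdiff.mp hj
    have hjF : j ∉ F := fun h => hjE (hFE (Finset.mem_inter.mpr ⟨h, hjK⟩))
    simp only [Finset.mem_sdiff, Finset.mem_erase, Finset.mem_union (s := E), not_or]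
    exact ⟨⟨fun h => hjE (h ▸ hFE hx), hjK⟩, hjE, hjF⟩
  have hsplit := Finset.card_sdiff_add_card_inter (A ∪ B) E
  rw [Finset.inter_comm, hEcard, hK] at hsplit
  have := Finset.card_le_card hsub
  omega

lemma OverlapAbsorbing.eq_of_two_le_card_inter (hover : OverlapAbsorbing Γ) (hΓ : Homogeneous 3 Γ)
    (hnc : NoCloning Γ) (hnr : NoRedundancy Γ) (hn : 6 ≤ n) (hA : IsMinimal Γ A)
    (hB : IsMinimal Γ B) (hAB : 2 ≤ (A ∩ B).card) : A = B := by
  have hne := hover.card_inter_ne_two hΓ hnc hnr hn hA hB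
  have hA3 := hΓ A hA
  have hB3 := hΓ B hB
  have hAeq := Finset.eq_of_subset_of_card_le (Finset.inter_subset_left (s₁ := A) (s₂ := B))
    (by omega)
  have hBeq := Finset.eq_of_subset_of_card_le (Finset.inter_subset_right (s₁ := A) (s₂ := B))
    (by omega)
  exact hAeq.symm.trans hBeq

end RankThree

/-! ### Counting minimal sets -/

section Packing

variable {α : Type*} [DecidableEq α] {S : Finset (Finset α)} {r t : ℕ}

lemma card_biUnion_powersetCard (hr : ∀ A ∈ S, A.card = r)
    (hS : ∀ A ∈ S, ∀ B ∈ S, t ≤ (A ∩ B).card → A = B) :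
    (S.biUnion (Finset.powersetCard t)).card = S.card * r.choose t := by
  rw [Finset.card_biUnion fun A hA B hB hAB => Finset.disjoint_left.mpr fun P hPA hPB => ?_,
    Finset.sum_const_nat fun A hA => by rw [Finset.card_powersetCard, hr A hA]]
  obtain ⟨hPA, hcard⟩ := Finset.mem_powersetCard.mp hPA
  obtain ⟨hPB, -⟩ := Finset.mem_powersetCard.mp hPB
  exact hAB (hS A hA B hB (hcard ▸ Finset.card_le_card (Finset.subset_inter hPA hPB)))

variable [Fintype α]

lemma biUnion_powersetCard_subset (S : Finset (Finset α)) (t : ℕ) :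
    S.biUnion (Finset.powersetCard t) ⊆ Finset.powersetCard t Finset.univ :=
  Finset.biUnion_subset.mpr fun A _ => Finset.powersetCard_mono (Finset.subset_univ A)

lemma card_mul_choose_le (hr : ∀ A ∈ S, A.card = r)
    (hS : ∀ A ∈ S, ∀ B ∈ S, t ≤ (A ∩ B).card → A = B) :
    S.card * r.choose t ≤ (Fintype.card α).choose t := by
  rw [← card_biUnion_powersetCard hr hS, ← Finset.card_univ, ← Finset.card_powersetCard]
  exact Finset.card_le_card (biUnion_powersetCard_subset S t)

lemma exists_subset_of_card_mul_choose_eq (hr : ∀ A ∈ S, A.card = r)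
    (hS : ∀ A ∈ S, ∀ B ∈ S, t ≤ (A ∩ B).card → A = B)
    (hcard : S.card * r.choose t = (Fintype.card α).choose t) {P : Finset α} (hP : P.card = t) :
    ∃ A ∈ S, P ⊆ A := by
  rw [← card_biUnion_powersetCard hr hS, ← Finset.card_univ, ← Finset.card_powersetCard] at hcard
  have hPmem : P ∈ S.biUnion (Finset.powersetCard t) := by
    rw [Finset.eq_of_subset_of_card_le (biUnion_powersetCard_subset S t) hcard.ge]
    exact Finset.mem_powersetCard_univ.mpr hP
  obtain ⟨A, hA, hPA⟩ := Finset.mem_biUnion.mp hPmem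
  exact ⟨A, hA, (Finset.mem_powersetCard.mp hPA).1⟩

end Packing

section Counting

variable {n k : ℕ} {Γ : Finset (Fin n) → Prop}

open Classical in
/-- The finite family of minimal authorized sets of `Γ`. -/
noncomputable def minimalSets (Γ : Finset (Fin n) → Prop) : Finset (Finset (Fin n)) :=
  Finset.univ.filter (IsMinimal Γ)

lemma mem_minimalSets {A : Finset (Fin n)} : A ∈ minimalSets Γ ↔ IsMinimal Γ A := by
  simp [minimalSets]

lemma ncard_setOf_isMinimal (Γ : Finset (Fin n) → Prop) :
    {A : Finset (Fin n) | IsMinimal Γ A}.ncard = (minimalSets Γ).card := by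
  rw [← Set.ncard_coe_finset]
  congr
  ext A
  exact mem_minimalSets.symm

-- A `k`-set that is not minimal is unauthorized, hence disjoint from some minimal set.
lemma Homogeneous.choose_le_card_minimalSets (hΓ : Homogeneous k Γ) (hnc : NoCloning Γ) :
    n.choose k ≤ (minimalSets Γ).card * (1 + (n - k).choose k) := by
  have hcover : Finset.powersetCard k Finset.univ ⊆
      minimalSets Γ ∪ (minimalSets Γ).biUnion fun E => Finset.powersetCard k Eᶜ := fun X hX => by
    have hXk := Finset.mem_powersetCard_univ.mp hX
    by_cases hΓX : Γ X
    · exact Finset.mem_union_left _ (mem_minimalSets.mpr (hΓ.isMinimal_of_card_eq hΓX hXk))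
    · obtain ⟨E, hE, hEX⟩ := hnc.exists_isMinimal_disjoint hΓX
      exact Finset.mem_union_right _ <| Finset.mem_biUnion.mpr ⟨E, mem_minimalSets.mpr hE,
        Finset.mem_powersetCard.mpr ⟨Finset.subset_compl_iff_disjoint_left.mpr hEX, hXk⟩⟩
  have hdisjoint : ∀ E ∈ minimalSets Γ, (Finset.powersetCard k Eᶜ).card = (n - k).choose k :=
    fun E hE => by
      rw [Finset.card_powersetCard, Finset.card_compl, Fintype.card_fin,
        hΓ E (mem_minimalSets.mp hE)]
  calc n.choose k = (Finset.powersetCard k (Finset.univ : Finset (Fin n))).card := by simp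
    _ ≤ _ := Finset.card_le_card hcover
    _ ≤ (minimalSets Γ).card + (minimalSets Γ).card * (n - k).choose k :=
      (Finset.card_union_le _ _).trans <| Nat.add_le_add_left
        (Finset.card_biUnion_le_card_mul _ _ _ fun E hE => (hdisjoint E hE).le) _
    _ = _ := by ring

lemma OverlapAbsorbing.eq_of_mem_minimalSets (hover : OverlapAbsorbing Γ) (hΓ : Homogeneous 3 Γ)
    (hnc : NoCloning Γ) (hnr : NoRedundancy Γ) (hn : 6 ≤ n) :
    ∀ A ∈ minimalSets Γ, ∀ B ∈ minimalSets Γ, 2 ≤ (A ∩ B).card → A = B := fun _ hA _ hB =>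
  hover.eq_of_two_le_card_inter hΓ hnc hnr hn (mem_minimalSets.mp hA) (mem_minimalSets.mp hB)

lemma not_overlapAbsorbing_six {Γ : Finset (Fin 6) → Prop} (hΓ : Homogeneous 3 Γ)
    (hnc : NoCloning Γ) (hnr : NoRedundancy Γ) : ¬ OverlapAbsorbing Γ := fun hover => by
  have hcover := hΓ.choose_le_card_minimalSets hnc
  have hpack := card_mul_choose_le (fun A hA => hΓ A (mem_minimalSets.mp hA))
    (hover.eq_of_mem_minimalSets hΓ hnc hnr le_rfl)
  norm_num [Nat.choose] at hcover hpack
  omega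

lemma OverlapAbsorbing.fano {Γ : Finset (Fin 7) → Prop} (hover : OverlapAbsorbing Γ)
    (hΓ : Homogeneous 3 Γ) (hnc : NoCloning Γ) (hnr : NoRedundancy Γ) :
    (minimalSets Γ).card = 7 ∧
      ∀ P : Finset (Fin 7), P.card = 2 → ∃! A : Finset (Fin 7), IsMinimal Γ A ∧ P ⊆ A := by
  have hpacked := hover.eq_of_mem_minimalSets hΓ hnc hnr (by norm_num)
  have hthree : ∀ A ∈ minimalSets Γ, A.card = 3 := fun A hA => hΓ A (mem_minimalSets.mp hA)
  have hseven : (minimalSets Γ).card = 7 := by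
    have hcover := hΓ.choose_le_card_minimalSets hnc
    have hpack := card_mul_choose_le hthree hpacked
    norm_num [Nat.choose] at hcover hpack
    omega
  refine ⟨hseven, fun P hP => ?_⟩
  obtain ⟨A, hA, hPA⟩ := exists_subset_of_card_mul_choose_eq hthree hpacked
    (by rw [hseven, Fintype.card_fin]; rfl) hP
  refine ⟨A, ⟨mem_minimalSets.mp hA, hPA⟩, fun B ⟨hB, hPB⟩ => ?_⟩
  exact hpacked B (mem_minimalSets.mpr hB) A hA
    (hP ▸ Finset.card_le_card (Finset.subset_inter hPB hPA))

end Counting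

theorem stmt11 (n k : ℕ) (hn3 : 3 ≤ n) (hn7 : n ≤ 7) (hk : 1 ≤ k)
    (Γ : Finset (Fin n) → Prop)
    (hmono : Monotonic Γ) (hnc : NoCloning Γ) (hnr : NoRedundancy Γ)
    (hhom : ∀ A : Finset (Fin n), IsMinimal Γ A → A.card = k)
    (ψ : (Fin (n + 1) → Fin 2) → ℂ) (hψ : IsPureQSSState Γ ψ) :
    (n = 5 ∧ k = 3 ∧ ∀ A : Finset (Fin n), IsMinimal Γ A ↔ A.card = 3) ∨
    (n = 7 ∧ k = 3 ∧ {A : Finset (Fin n) | IsMinimal Γ A}.ncard = 7 ∧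
      ∀ P : Finset (Fin n), P.card = 2 →
        ∃! A : Finset (Fin n), IsMinimal Γ A ∧ P ⊆ A) := by
  have hΓ : Homogeneous k Γ := hhom
  have hk1 : k ≠ 1 := hΓ.ne_one hmono hnc hnr (by omega)
  have h2k : 2 * k ≤ n + 1 := hΓ.two_mul_le hnc
  obtain ⟨rfl, rfl⟩ | ⟨rfl, rfl⟩ | ⟨hn, rfl⟩ | ⟨rfl, rfl⟩ | ⟨rfl, rfl⟩ | ⟨rfl, rfl⟩ :
      (n = 3 ∧ k = 2) ∨ (n = 7 ∧ k = 4) ∨ (4 ≤ n ∧ k = 2) ∨ (n = 5 ∧ k = 3) ∨ (n = 6 ∧ k = 3) ∨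
        (n = 7 ∧ k = 3) := by omega
  · exact absurd (hψ.absolutelyMaximallyEntangled hnc hΓ rfl)
      (not_absolutelyMaximallyEntangled_four ψ)
  · exact absurd (hψ.absolutelyMaximallyEntangled hnc hΓ rfl)
      (not_absolutelyMaximallyEntangled_eight ψ)
  · exact absurd rfl (hΓ.ne_two hmono hnc hnr hn)
  · exact Or.inl ⟨rfl, rfl, hΓ.isMinimal_iff_card_eq hnc rfl⟩
  · exact absurd (overlapAbsorbing_six hψ hnc hΓ) (not_overlapAbsorbing_six hΓ hnc hnr)
  · obtain ⟨hseven, hfano⟩ := (overlapAbsorbing_seven hψ hmono hnc hnr hΓ).fano hΓ hnc hnr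
    exact Or.inr ⟨rfl, rfl, (ncard_setOf_isMinimal Γ).trans hseven, hfano⟩
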